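/- Let Q be a privacy protocol all of whose entries are positive and whose rank is a, and let μ be a Borel probability measure on the simplex 𝒫 having a continuous density f. Then liminf_{n→∞} MSE^freq_{μ,n}(Q,Φ_opt,n) / ( (a/(2πe·n²)) · e^{(2/(a−1))·H_n(F|Y⃗)} ) ≥ 1. -/

import Mathlib

/-!
Write `m = a - 1`, `H = H_n(F|Y)`, `MSE` for the error of the posterior mean, and `u_n` for the ratio
in the statement. The proof compares the discrete entropy `H` with the entropy of a Gaussian.

*Upper bound on the entropy* (`HFcond_upper`). Given `Y = y`, the counts `n F` are integer valued and
are determined by any `a - 1` of their coordinates. Gibbs' inequality against a product of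
discretised Gaussians of variance `s` centred at the estimator, averaged over the omitted coordinate,
bounds `H` by `m (1/(8s) + log (2πs) / 2 + n² MSE / (2sa))`, where `1/(8s)` is the discretisation
cost (`gauss_sum`). The choice `s = n² MSE / a + 1/4` gives
`e^{2H/m} ≤ 2πe (n² MSE / a + 1/4)`, that is, `u_n ≥ 1 - 2πe / (4 e^{2H/m})`.

*Lower bound on the entropy* (`HFcond_lower`, `exists_exp_HFcond_ge`). The correction tends to zero
once `e^{2H/m} ≥ c n`. Given `p` and `y`, the word `x` has independent coordinates, and Fourier
inversion on the torus (`fourier_bound`, `local_bound`) bounds the conditional probability of every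
value of `F` by a constant times `∏ (1 + κ n p_x)^{-1/2}`, the product over all coordinates except
a large one. Its integral over the simplex against the bounded density is `O(n^{-m/2})`
(`integral_spread_measure_le`), and a pointwise bound on the joint probabilities bounds the conditional
entropy from below (`entropy_lower`).

*Boundedness of the ratio* (`exists_MSEfreq_le`). The real-valued `liminf` of an unbounded sequence
would be a junk value, so an upper bound on `u_n` is needed as well. It follows from
`e^{2H/m} ≥ c n` and `MSE ≤ C / n`; the latter compares the posterior mean, which is optimal, with the
unbiased estimator built from a left inverse of `Q`, which exists because `Q` has rank `a`.
-/

open MeasureTheory Matrix Finset Filter Real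

noncomputable section

/-- The probability simplex in `ℝ^a`. -/
def simplex (a : ℕ) : Set (Fin a → ℝ) :=
  {p | (∀ x, 0 ≤ p x) ∧ ∑ x, p x = 1}

/-- Likelihood `L_y(p) = ∏ i, (Qp)_{y i}`. -/
def lik {a b n : ℕ} (Q : Matrix (Fin b) (Fin a) ℝ) (y : Fin n → Fin b)
    (p : Fin a → ℝ) : ℝ :=
  ∏ i, Q.mulVec p (y i)

/-- Mean squared error for distribution estimation. -/
def MSEdistr {a b n : ℕ} (Q : Matrix (Fin b) (Fin a) ℝ) (μ : Measure (Fin a → ℝ))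
    (Est : (Fin n → Fin b) → (Fin a → ℝ)) : ℝ :=
  ∑ y : (Fin n → Fin b), ∫ p, (∑ x, (p x - Est y x) ^ 2) * lik Q y p ∂μ

/-- The posterior-mean estimator for distribution estimation. -/
def PiOpt {a b n : ℕ} (Q : Matrix (Fin b) (Fin a) ℝ) (μ : Measure (Fin a → ℝ))
    (y : Fin n → Fin b) : Fin a → ℝ :=
  fun x => (∫ p, p x * lik Q y p ∂μ) / (∫ p, lik Q y p ∂μ)

/-- Empirical frequency vector of a data vector. -/
def freqVec {a n : ℕ} (xv : Fin n → Fin a) : Fin a → ℝ :=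
  fun α => ((Finset.univ.filter fun i => xv i = α).card : ℝ) / n

/-- Joint weight `w(x⃗,y⃗) = ∫ ∏ i, p_{x_i} Q_{y_i|x_i} dμ(p)`. -/
def wgt {a b n : ℕ} (Q : Matrix (Fin b) (Fin a) ℝ) (μ : Measure (Fin a → ℝ))
    (xv : Fin n → Fin a) (y : Fin n → Fin b) : ℝ :=
  ∫ p, (∏ i, p (xv i) * Q (y i) (xv i)) ∂μ

/-- Mean squared error for frequency estimation. -/
def MSEfreq {a b n : ℕ} (Q : Matrix (Fin b) (Fin a) ℝ) (μ : Measure (Fin a → ℝ))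
    (Est : (Fin n → Fin b) → (Fin a → ℝ)) : ℝ :=
  ∑ xv : (Fin n → Fin a), ∑ y : (Fin n → Fin b),
    wgt Q μ xv y * ∑ α, (freqVec xv α - Est y α) ^ 2

/-- The posterior-mean estimator for frequency estimation. -/
def PhiOpt {a b n : ℕ} (Q : Matrix (Fin b) (Fin a) ℝ) (μ : Measure (Fin a → ℝ))
    (y : Fin n → Fin b) : Fin a → ℝ :=
  fun α => (∑ xv : (Fin n → Fin a), wgt Q μ xv y * freqVec xv α) /
    (∑ xv : (Fin n → Fin a), wgt Q μ xv y)

/-- `P(φ, y⃗) = ∑_{x⃗ : F(x⃗) = φ} w(x⃗, y⃗)`. -/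
def Pphi {a b n : ℕ} (Q : Matrix (Fin b) (Fin a) ℝ) (μ : Measure (Fin a → ℝ))
    (φ : Fin a → ℝ) (y : Fin n → Fin b) : ℝ := by
  classical
  exact ∑ xv ∈ Finset.univ.filter (fun xv : Fin n → Fin a => freqVec xv = φ), wgt Q μ xv y

/-- Conditional Shannon entropy `H_n(F | Y⃗)` (terms with zero probability vanish since
`Real.log 0 = 0`). -/
def HFcond {a b : ℕ} (Q : Matrix (Fin b) (Fin a) ℝ) (μ : Measure (Fin a → ℝ))
    (n : ℕ) : ℝ := by
  classical
  exact -(∑ y : (Fin n → Fin b), ∑ φ ∈ Finset.image (freqVec (a := a) (n := n)) Finset.univ,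
      Pphi Q μ φ y * Real.log (Pphi Q μ φ y /
        ∑ φ' ∈ Finset.image (freqVec (a := a) (n := n)) Finset.univ, Pphi Q μ φ' y))

/-- The set `Δ = {q ∈ ℝ^m : q ≥ 0, ∑ q ≤ 1}`. -/
def stdCorner (m : ℕ) : Set (Fin m → ℝ) :=
  {q | (∀ i, 0 ≤ q i) ∧ ∑ i, q i ≤ 1}

/-- The identification `Δ ⊂ ℝ^{a-1} → 𝒫 ⊂ ℝ^a`,
`q ↦ (q_1, …, q_{a-1}, 1 - ∑ q_i)`. -/
def emb (a : ℕ) (q : Fin (a - 1) → ℝ) : Fin a → ℝ :=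
  fun x => if h : (x : ℕ) < a - 1 then q ⟨x.1, h⟩ else 1 - ∑ i, q i

/-- `μ` has density `f` (w.r.t. Lebesgue measure on `Δ`). -/
def IsDensity {a : ℕ} (μ : Measure (Fin a → ℝ)) (f : (Fin (a - 1) → ℝ) → ℝ) : Prop :=
  Measurable f ∧ (∀ q, 0 ≤ f q) ∧ (∫ q in stdCorner (a - 1), f q) = 1 ∧
  ∀ g : (Fin a → ℝ) → ℝ, Measurable g → (∃ C, ∀ p, |g p| ≤ C) →
    (∫ p, g p ∂μ) = ∫ q in stdCorner (a - 1), g (emb a q) * f q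

/-- `μ` has continuous density `f`. -/
def IsContDensity {a : ℕ} (μ : Measure (Fin a → ℝ)) (f : (Fin (a - 1) → ℝ) → ℝ) : Prop :=
  ContinuousOn f (stdCorner (a - 1)) ∧ (∀ q, 0 ≤ f q) ∧
  (∫ q in stdCorner (a - 1), f q) = 1 ∧
  ∀ g : (Fin a → ℝ) → ℝ, Measurable g → (∃ C, ∀ p, |g p| ≤ C) →
    (∫ p, g p ∂μ) = ∫ q in stdCorner (a - 1), g (emb a q) * f q

/-- Normalisation constant `C_{y⃗} = ∫_Δ f(q) L_{y⃗}(p(q)) dλ(q)`. -/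
def Cw {a b n : ℕ} (Q : Matrix (Fin b) (Fin a) ℝ) (f : (Fin (a - 1) → ℝ) → ℝ)
    (y : Fin n → Fin b) : ℝ :=
  ∫ q in stdCorner (a - 1), f q * lik Q y (emb a q)

/-- Posterior density `g_{y⃗}(q) = f(q) L_{y⃗}(p(q)) / C_{y⃗}`. -/
def gpost {a b n : ℕ} (Q : Matrix (Fin b) (Fin a) ℝ) (f : (Fin (a - 1) → ℝ) → ℝ)
    (y : Fin n → Fin b) (q : Fin (a - 1) → ℝ) : ℝ :=
  f q * lik Q y (emb a q) / Cw Q f y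

/-- Conditional differential entropy `h_n(P | Y⃗)`. -/
def hCond {a b : ℕ} (Q : Matrix (Fin b) (Fin a) ℝ) (f : (Fin (a - 1) → ℝ) → ℝ)
    (n : ℕ) : ℝ :=
  ∑ y : (Fin n → Fin b),
    Cw Q f y * (-(∫ q in stdCorner (a - 1), gpost Q f y q * Real.log (gpost Q f y q)))

/-- The matrix `D_p = Qᵀ · diag(Qp)⁻¹ · Q`. -/
def Dmat {a b : ℕ} (Q : Matrix (Fin b) (Fin a) ℝ) (p : Fin a → ℝ) :
    Matrix (Fin a) (Fin a) ℝ :=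
  Qᵀ * Matrix.diagonal (fun y => (Q.mulVec p y)⁻¹) * Q

/-- The constant `γ_μ(Q)`. -/
def gammaMu {a b : ℕ} (Q : Matrix (Fin b) (Fin a) ℝ) (μ : Measure (Fin a → ℝ)) : ℝ :=
  (((a : ℝ) - 1) / 2) * Real.log (2 * π * Real.exp 1) -
    (1 / 2) * ∫ p, Real.log (Dmat Q p).det ∂μ

/-- The truncated column `w_x = (Q_{1|x}, …, Q_{b-1|x})`. -/
def wcol {a b : ℕ} (Q : Matrix (Fin b) (Fin a) ℝ) (x : Fin a) : Fin (b - 1) → ℝ :=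
  fun y => Q ⟨y.1, lt_of_lt_of_le y.2 (Nat.sub_le b 1)⟩ x

/-- The matrix `E_x = diag(w_x) - w_x w_xᵀ`. -/
def Emat {a b : ℕ} (Q : Matrix (Fin b) (Fin a) ℝ) (x : Fin a) :
    Matrix (Fin (b - 1)) (Fin (b - 1)) ℝ :=
  Matrix.diagonal (wcol Q x) - Matrix.vecMulVec (wcol Q x) (wcol Q x)

/-- The matrix `G_p = ∑ x, p_x E_x`. -/
def Gmat {a b : ℕ} (Q : Matrix (Fin b) (Fin a) ℝ) (p : Fin a → ℝ) :
    Matrix (Fin (b - 1)) (Fin (b - 1)) ℝ :=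
  ∑ x, p x • Emat Q x

/-- The constant `δ_μ(Q)`. -/
def deltaMu {a b : ℕ} (Q : Matrix (Fin b) (Fin a) ℝ) (μ : Measure (Fin a → ℝ)) : ℝ :=
  gammaMu Q μ +
    (1 / 2) * ∫ p, (Real.log (Gmat Q p).det - ∑ y, Real.log (Q.mulVec p y)) ∂μ

/-- `Q` satisfies `ε`-local differential privacy. -/
def SatisfiesLDP {a b : ℕ} (Q : Matrix (Fin b) (Fin a) ℝ) (ε : ℝ) : Prop :=
  ∀ x x' : Fin a, ∀ y : Fin b, Q y x' ≤ Real.exp ε * Q y x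

/-! ### Discretised Gaussians -/

/-- A Gaussian value at the centre of a unit cell is at most `e^{1/(8s)}` times its mean over the
cell. On the cell the density is at least `e^{-1/(8s)}` times its central value times
`e^{-(k-c)(x-k)/s} ≥ 1 - (k-c)(x-k)/s`, and the linear term integrates to zero. -/
lemma gauss_cell {s : ℝ} (hs : 0 < s) (c k : ℝ) :
    Real.exp (-(k - c) ^ 2 / (2 * s)) ≤ Real.exp (1 / (8 * s)) *
      ∫ x in (k - 1 / 2)..(k + 1 / 2), Real.exp (-(x - c) ^ 2 / (2 * s)) := by
  have key : Real.exp (-(k - c) ^ 2 / (2 * s)) * Real.exp (-(1 / (8 * s))) ≤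
      ∫ x in (k - 1 / 2)..(k + 1 / 2), Real.exp (-(x - c) ^ 2 / (2 * s)) := by
    have h1 : ∫ x in (k - 1 / 2)..(k + 1 / 2),
        (Real.exp (-(k - c) ^ 2 / (2 * s)) * Real.exp (-(1 / (8 * s)))) *
          (1 - (k - c) / s * (x - k)) =
        Real.exp (-(k - c) ^ 2 / (2 * s)) * Real.exp (-(1 / (8 * s))) := by
      rw [intervalIntegral.integral_const_mul]
      have : ∫ x in (k - 1 / 2)..(k + 1 / 2), (1 - (k - c) / s * (x - k)) = 1 := by
        rw [intervalIntegral.integral_sub (by simp)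
          (Continuous.intervalIntegrable (by fun_prop) _ _)]
        rw [intervalIntegral.integral_const_mul, intervalIntegral.integral_comp_sub_right
          (fun x => x) k]
        simp
        norm_num
      rw [this, mul_one]
    rw [← h1]
    apply intervalIntegral.integral_mono_on (by linarith)
    · exact Continuous.intervalIntegrable (by fun_prop) _ _
    · exact Continuous.intervalIntegrable (by fun_prop) _ _
    · intro x hx
      have hu : (x - k) ^ 2 ≤ 1 / 4 := by
        have h1 := hx.1
        have h2 := hx.2
        nlinarith
      have h3 : Real.exp (-(x - c) ^ 2 / (2 * s)) =
          Real.exp (-(k - c) ^ 2 / (2 * s)) * Real.exp (-((x - k) ^ 2 / (2 * s))) *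
            Real.exp (-((k - c) / s * (x - k))) := by
        rw [← Real.exp_add, ← Real.exp_add]
        congr 1
        field_simp
        ring
      rw [h3]
      have h4 : Real.exp (-(1 / (8 * s))) ≤ Real.exp (-((x - k) ^ 2 / (2 * s))) := by
        apply Real.exp_le_exp.2
        rw [neg_le_neg_iff, div_le_div_iff₀ (by positivity) (by positivity)]
        nlinarith
      have h5 := Real.add_one_le_exp (-((k - c) / s * (x - k)))
      calc _ ≤ Real.exp (-(k - c) ^ 2 / (2 * s)) * Real.exp (-(1 / (8 * s))) *
            Real.exp (-((k - c) / s * (x - k))) := by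
            gcongr; linarith
        _ ≤ _ := by gcongr
  calc Real.exp (-(k - c) ^ 2 / (2 * s)) = Real.exp (1 / (8 * s)) *
        (Real.exp (-(k - c) ^ 2 / (2 * s)) * Real.exp (-(1 / (8 * s)))) := by
        rw [mul_left_comm, ← Real.exp_add (1 / (8 * s))]; simp
    _ ≤ _ := by gcongr

/-- The discretised Gaussian `k ↦ e^{-(k-c)²/(2s)}` has total mass at most
`e^{1/(8s)} √(2πs)` on the naturals below `N`, uniformly in the centre `c` and in `N`. -/
lemma gauss_sum {s : ℝ} (hs : 0 < s) (c : ℝ) (N : ℕ) :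
    ∑ k ∈ range N, Real.exp (-((k : ℝ) - c) ^ 2 / (2 * s)) ≤
      Real.exp (1 / (8 * s)) * √(2 * π * s) := by
  have hform : (fun x : ℝ => Real.exp (-(x - c) ^ 2 / (2 * s))) =
      fun x => (fun z : ℝ => Real.exp (-(1 / (2 * s)) * z ^ 2)) (x - c) := by
    funext x; congr 1; field_simp
  have hint : Integrable (fun x : ℝ => Real.exp (-(x - c) ^ 2 / (2 * s))) := by
    rw [hform]
    exact (integrable_exp_neg_mul_sq (b := 1 / (2 * s)) (by positivity)).comp_sub_right c
  have htot : ∫ x : ℝ, Real.exp (-(x - c) ^ 2 / (2 * s)) = √(2 * π * s) := by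
    rw [hform, integral_sub_right_eq_self (fun z : ℝ => Real.exp (-(1 / (2 * s)) * z ^ 2)) c,
      integral_gaussian]
    congr 1; field_simp
  have hadj := intervalIntegral.sum_integral_adjacent_intervals (n := N) (μ := volume)
    (f := fun x : ℝ => Real.exp (-(x - c) ^ 2 / (2 * s))) (a := fun k => (k : ℝ) - 1 / 2)
    (fun k _ => hint.intervalIntegrable)
  calc _ ≤ ∑ k ∈ range N, Real.exp (1 / (8 * s)) *
        ∫ x in ((k : ℝ) - 1 / 2)..((k : ℝ) + 1 / 2), Real.exp (-(x - c) ^ 2 / (2 * s)) :=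
        sum_le_sum fun k _ => gauss_cell hs c k
    _ = Real.exp (1 / (8 * s)) * ∫ x in ((0 : ℕ) : ℝ) - 1 / 2..(N : ℝ) - 1 / 2,
          Real.exp (-(x - c) ^ 2 / (2 * s)) := by
        rw [← mul_sum, ← hadj]
        congr 1
        refine sum_congr rfl fun k _ => ?_
        congr 1
        push_cast; ring
    _ ≤ _ := by
        gcongr
        rw [← htot, intervalIntegral.integral_of_le
          (by push_cast; linarith [Nat.cast_nonneg (α := ℝ) N])]
        exact setIntegral_le_integral hint (ae_of_all _ fun x => (Real.exp_pos _).le)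

/-! ### Discrete entropy and moments -/

/-- Gibbs' inequality for an unnormalised nonnegative family `P` and a positive subprobability
`G`: the entropy of `P` is at most its cross entropy relative to `G`. -/
lemma entropy_gibbs {ι : Type*} (S : Finset ι) (P G : ι → ℝ) (hP : ∀ i ∈ S, 0 ≤ P i)
    (hG : ∀ i ∈ S, 0 < G i) (hG1 : ∑ i ∈ S, G i ≤ 1) :
    -∑ i ∈ S, P i * Real.log (P i / ∑ j ∈ S, P j) ≤ -∑ i ∈ S, P i * Real.log (G i) := by
  set W := ∑ j ∈ S, P j with hW
  have hW0 : 0 ≤ W := sum_nonneg hP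
  have h : ∀ i ∈ S, P i * Real.log (G i) - P i * Real.log (P i / W) ≤ W * G i - P i := by
    intro i hi
    rcases (hP i hi).eq_or_lt with h0 | h0
    · rw [← h0]; have := (hG i hi).le; simp; positivity
    · have hWp : 0 < W := lt_of_lt_of_le h0 (single_le_sum hP hi)
      have hg := hG i hi
      have := Real.log_le_sub_one_of_pos (x := W * G i / P i) (by positivity)
      rw [Real.log_div (by positivity) h0.ne', Real.log_mul hWp.ne' hg.ne'] at this
      rw [Real.log_div h0.ne' hWp.ne']
      have h2 := mul_le_mul_of_nonneg_left this h0.le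
      have h3 : P i * (W * G i / P i - 1) = W * G i - P i := by field_simp
      linarith
  have := sum_le_sum h
  rw [sum_sub_distrib, sum_sub_distrib, ← mul_sum, ← hW] at this
  nlinarith

/-- A conditional min-entropy bound: if the joint probabilities `P y i` are at most `β y`, then
the conditional entropy of `i` given `y` is at least `-log (∑ y, β y)`. -/
lemma entropy_lower {ι κ : Type*} (T : Finset κ) (S : Finset ι) (P : κ → ι → ℝ) (β : κ → ℝ)
    {B : ℝ} (hB : 0 < B)
    (hP : ∀ y ∈ T, ∀ i ∈ S, 0 ≤ P y i) (hPβ : ∀ y ∈ T, ∀ i ∈ S, P y i ≤ β y)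
    (hβ : ∀ y ∈ T, 0 ≤ β y)
    (htot : ∑ y ∈ T, ∑ i ∈ S, P y i = 1) (hβB : ∑ y ∈ T, β y ≤ B) :
    -Real.log B ≤ -∑ y ∈ T, ∑ i ∈ S, P y i * Real.log (P y i / ∑ j ∈ S, P y j) := by
  have h : ∀ y ∈ T, ∑ i ∈ S, P y i * Real.log (P y i / ∑ j ∈ S, P y j) ≤
      β y / B - (∑ i ∈ S, P y i) + (∑ i ∈ S, P y i) * Real.log B := by
    intro y hy
    set W := ∑ j ∈ S, P y j with hW
    have hW0 : 0 ≤ W := sum_nonneg (hP y hy)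
    rcases hW0.eq_or_lt with h0 | hWp
    · rw [← h0]; simp; exact div_nonneg (hβ y hy) hB.le
    have hterm : ∀ i ∈ S, P y i * Real.log (P y i / W) ≤
        P y i * (β y / (W * B) - 1 + Real.log B) := by
      intro i hi
      rcases (hP y hy i hi).eq_or_lt with h0 | h0
      · rw [← h0]; simp
      apply mul_le_mul_of_nonneg_left _ h0.le
      have h1 : P y i / W = P y i / (W * B) * B := by field_simp
      rw [h1, Real.log_mul (by positivity) hB.ne']
      have h2 := Real.log_le_sub_one_of_pos (x := P y i / (W * B)) (by positivity)
      have h3 : P y i / (W * B) ≤ β y / (W * B) := by gcongr; exact hPβ y hy i hi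
      linarith
    refine (sum_le_sum hterm).trans ?_
    rw [← sum_mul, ← hW]
    have : W * (β y / (W * B) - 1 + Real.log B) = β y / B - W + W * Real.log B := by
      field_simp
    rw [this]
  have h2 := sum_le_sum h
  rw [sum_add_distrib, sum_sub_distrib, ← sum_div, ← sum_mul, htot] at h2
  have : (∑ y ∈ T, β y) / B ≤ 1 := (div_le_one hB).2 hβB
  linarith

/-- Total mass, mean and variance of a sum of independent centred random variables `v i`, where
the `i`-th coordinate has law `q i`. The weights `q i` need not be nonnegative. -/
lemma pi_second_moment {β : Type*} [Fintype β] : ∀ (n : ℕ) (q v : Fin n → β → ℝ)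
    (_ : ∀ i, ∑ b, q i b = 1) (_ : ∀ i, ∑ b, q i b * v i b = 0),
    (∑ y : Fin n → β, ∏ i, q i (y i)) = 1 ∧
    (∑ y : Fin n → β, (∏ i, q i (y i)) * ∑ i, v i (y i)) = 0 ∧
    (∑ y : Fin n → β, (∏ i, q i (y i)) * (∑ i, v i (y i)) ^ 2) =
      ∑ i, ∑ b, q i b * v i b ^ 2 := by
  intro n
  induction n with
  | zero => intro q v _ _; simp
  | succ n ih =>
    intro q v hq hv
    obtain ⟨h1, h2, h3⟩ := ih (fun i => q i.succ) (fun i => v i.succ)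
      (fun i => hq _) (fun i => hv _)
    have hs : ∀ F : (Fin (n + 1) → β) → ℝ, ∑ y, F y =
        ∑ b : β, ∑ y : Fin n → β, F (Fin.cons b y) := by
      intro F
      rw [← (Fin.consEquiv (fun _ : Fin (n + 1) => β)).sum_comp, Fintype.sum_prod_type]
      rfl
    refine ⟨?_, ?_, ?_⟩
    · rw [hs]
      simp only [Fin.prod_univ_succ, Fin.cons_zero, Fin.cons_succ, ← mul_sum, h1, mul_one, hq]
    · rw [hs]
      simp only [Fin.prod_univ_succ, Fin.sum_univ_succ, Fin.cons_zero, Fin.cons_succ]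
      have : ∀ b, ∑ y : Fin n → β, q 0 b * (∏ i, q i.succ (y i)) *
          (v 0 b + ∑ i, v i.succ (y i)) = q 0 b * v 0 b := by
        intro b
        calc _ = q 0 b * v 0 b * (∑ y : Fin n → β, ∏ i, q (Fin.succ i) (y i)) + q 0 b *
              ∑ y : Fin n → β, (∏ i, q (Fin.succ i) (y i)) * ∑ i, v (Fin.succ i) (y i) := by
              rw [mul_sum, mul_sum, ← sum_add_distrib]
              refine sum_congr rfl fun y _ => by ring
          _ = _ := by rw [h1, h2]; ring
      simp only [this, hv]
    · rw [hs]
      simp only [Fin.prod_univ_succ, Fin.sum_univ_succ, Fin.cons_zero, Fin.cons_succ]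
      have : ∀ b, ∑ y : Fin n → β, q 0 b * (∏ i, q i.succ (y i)) *
          (v 0 b + ∑ i, v i.succ (y i)) ^ 2 = q 0 b * v 0 b ^ 2 + q 0 b *
            ∑ i : Fin n, ∑ b, q i.succ b * v i.succ b ^ 2 := by
        intro b
        calc _ = q 0 b * v 0 b ^ 2 * (∑ y : Fin n → β, ∏ i, q (Fin.succ i) (y i)) +
              2 * q 0 b * v 0 b * (∑ y : Fin n → β, (∏ i, q (Fin.succ i) (y i)) *
                ∑ i, v (Fin.succ i) (y i)) + q 0 b *
              ∑ y : Fin n → β, (∏ i, q (Fin.succ i) (y i)) * (∑ i, v (Fin.succ i) (y i)) ^ 2 := by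
              rw [mul_sum, mul_sum, mul_sum, ← sum_add_distrib, ← sum_add_distrib]
              refine sum_congr rfl fun y _ => by ring
          _ = _ := by rw [h1, h2, h3]; ring
      simp only [this, sum_add_distrib, ← sum_mul, hq, one_mul]

/-! ### A local limit bound by Fourier inversion -/

/-- Bound on the characteristic function of the nonnegative weights `r` at a phase `θ` vanishing at
`c`, obtained by separating the `c`-th term `r c` from the rest and expanding the square. -/
lemma char_sq_bound {a : ℕ} (r : Fin a → ℝ) (hr : ∀ x, 0 ≤ r x) (c : Fin a) (θ : Fin a → ℝ)
    (hθ : θ c = 0) :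
    ‖∑ x, (r x : ℂ) * Complex.exp (θ x * Complex.I)‖ ^ 2 ≤
      (∑ x, r x) ^ 2 - 2 * r c * ∑ x, r x * (1 - Real.cos (θ x)) := by
  set W : ℂ := ∑ x ∈ univ.erase c, (r x : ℂ) * Complex.exp (θ x * Complex.I) with hW
  have h1 : ∑ x, (r x : ℂ) * Complex.exp (θ x * Complex.I) = (r c : ℂ) + W := by
    rw [← add_sum_erase _ _ (mem_univ c), hθ]; simp [hW]
  have h2 : ∑ x, r x = r c + ∑ x ∈ univ.erase c, r x := (add_sum_erase _ _ (mem_univ c)).symm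
  have h3 : ∑ x, r x * (1 - Real.cos (θ x)) =
      ∑ x ∈ univ.erase c, r x - ∑ x ∈ univ.erase c, r x * Real.cos (θ x) := by
    rw [← add_sum_erase _ _ (mem_univ c), hθ, ← sum_sub_distrib]
    simp [mul_sub]
  have h4 : ‖W‖ ≤ ∑ x ∈ univ.erase c, r x := by
    refine (norm_sum_le _ _).trans (sum_le_sum fun x _ => ?_)
    rw [norm_mul, Complex.norm_exp_ofReal_mul_I, mul_one, Complex.norm_real,
      Real.norm_of_nonneg (hr x)]
  have h5 : W.re = ∑ x ∈ univ.erase c, r x * Real.cos (θ x) := by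
    rw [hW, Complex.re_sum]
    refine sum_congr rfl fun x _ => ?_
    rw [Complex.re_ofReal_mul, Complex.exp_ofReal_mul_I_re]
  have h6 : ‖(r c : ℂ) + W‖ ^ 2 = r c ^ 2 + 2 * r c * W.re + ‖W‖ ^ 2 := by
    rw [← Complex.normSq_eq_norm_sq, ← Complex.normSq_eq_norm_sq, Complex.normSq_apply,
      Complex.normSq_apply]
    simp
    ring
  rw [h1, h6, h2, h3, h5]
  nlinarith [norm_nonneg W]

/-- The characteristic function of the posterior weights `p x * q x` of a single symbol decays like
a Gaussian, provided `q` is bounded below by `δ` and `c` is a coordinate with `p c ≥ 1/a`. -/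
lemma char_bound {a : ℕ} (p q : Fin a → ℝ) {δ : ℝ} (hδ : 0 < δ) (hp : ∀ x, 0 ≤ p x)
    (hp1 : ∑ x, p x = 1) (hq : ∀ x, δ ≤ q x) (hq1 : ∀ x, q x ≤ 1) (c : Fin a)
    (hc : 1 / (a : ℝ) ≤ p c) (θ : Fin a → ℝ) (hθ : θ c = 0) :
    ‖∑ x, ((p x * q x : ℝ) : ℂ) * Complex.exp (θ x * Complex.I)‖ ≤
      (∑ x, p x * q x) * Real.exp (-(δ ^ 2 / a * ∑ x, p x * (1 - Real.cos (θ x)))) := by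
  have hq0 : ∀ x, 0 ≤ q x := fun x => hδ.le.trans (hq x)
  have hr : ∀ x, 0 ≤ p x * q x := fun x => mul_nonneg (hp x) (hq0 x)
  have hZ0 : 0 ≤ ∑ x, p x * q x := sum_nonneg fun x _ => hr x
  have hZ1 : ∑ x, p x * q x ≤ 1 := by
    rw [← hp1]
    exact sum_le_sum fun x _ => mul_le_of_le_one_right (hp x) (hq1 x)
  have ha : 0 < (a : ℝ) := by
    have := c.pos
    exact_mod_cast this
  refine le_of_sq_le_sq ?_ (by positivity)
  refine (char_sq_bound _ hr c θ hθ).trans ?_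
  set S := ∑ x, p x * (1 - Real.cos (θ x)) with hS
  have hS0 : 0 ≤ S := sum_nonneg fun x _ => mul_nonneg (hp x) (by linarith [Real.cos_le_one (θ x)])
  have hrc : δ / a ≤ p c * q c := by
    calc δ / a = 1 / a * δ := by ring
      _ ≤ _ := mul_le_mul hc (hq c) hδ.le (hp c)
  have hsum : δ * S ≤ ∑ x, p x * q x * (1 - Real.cos (θ x)) := by
    rw [hS, mul_sum]
    refine sum_le_sum fun x _ => ?_
    have h1 : 0 ≤ 1 - Real.cos (θ x) := by linarith [Real.cos_le_one (θ x)]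
    have h2 := mul_le_mul_of_nonneg_right (hq x) (mul_nonneg (hp x) h1)
    linarith
  set Z := ∑ x, p x * q x
  have h7 : δ / a * (δ * S) ≤ p c * q c * ∑ x, p x * q x * (1 - Real.cos (θ x)) :=
    mul_le_mul hrc hsum (by positivity) (hr c)
  have h8 := Real.add_one_le_exp (-(2 * (δ ^ 2 / a * S)))
  have h9 : Real.exp (-(δ ^ 2 / a * S)) ^ 2 = Real.exp (-(2 * (δ ^ 2 / a * S))) := by
    rw [← Real.exp_nat_mul]; congr 1; push_cast; ring
  rw [mul_pow, h9]
  have h10 : δ / a * (δ * S) = δ ^ 2 / a * S := by ring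
  have hk : 0 ≤ δ ^ 2 / a * S := by positivity
  have h11 : Z ^ 2 ≤ 1 := by nlinarith
  nlinarith [sq_nonneg Z]

/-- Product Lebesgue measure on the torus `(-π, π]^a`, of total mass `(2π)^a`. All `a` angles are
kept although only those different from a distinguished coordinate are used. -/
def torus (a : ℕ) : Measure (Fin a → ℝ) :=
  Measure.pi fun _ => volume.restrict (Set.Ioc (-π) π)

instance (a : ℕ) : IsFiniteMeasure (torus a) := by unfold torus; infer_instance

lemma integral_torus_char (j : ℤ) :
    ∫ t in Set.Ioc (-π) π, Complex.exp ((j : ℂ) * t * Complex.I) =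
      if j = 0 then ((2 * π : ℝ) : ℂ) else 0 := by
  rw [← intervalIntegral.integral_of_le (by linarith [Real.pi_pos])]
  split_ifs with h
  · subst h; simp; ring
  · have h1 : ∀ t : ℝ, (j : ℂ) * t * Complex.I = ((j : ℂ) * Complex.I) * t := fun t => by ring
    simp_rw [h1]
    rw [integral_exp_mul_complex (by simp [h])]
    have h2 : Complex.exp ((j : ℂ) * Complex.I * (π : ℝ)) =
        Complex.exp ((j : ℂ) * Complex.I * ((-π : ℝ) : ℂ)) := by
      rw [Complex.exp_eq_exp_iff_exists_int]
      exact ⟨j, by push_cast; ring⟩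
    rw [h2]; simp

/-- Laplace-type bound, from `1 - cos t ≥ 2t²/π²` on `[-π, π]` and the Gaussian integral. The factor
`e²` pays for replacing `A` by `1 + A`, which makes the bound meaningful for small `A`. -/
lemma exp_cos_integral_le {A : ℝ} (hA : 0 ≤ A) :
    ∫ t in Set.Ioc (-π) π, Real.exp (-(A * (1 - Real.cos t))) ≤
      Real.exp 2 * √(π ^ 3 / 2) / √(1 + A) := by
  have hπ := Real.pi_pos
  have hb : 0 < 2 / π ^ 2 * (1 + A) := by positivity
  have hI := (integrable_exp_neg_mul_sq hb)
  calc _ ≤ ∫ t in Set.Ioc (-π) π, Real.exp 2 * Real.exp (-(2 / π ^ 2 * (1 + A)) * t ^ 2) := by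
        apply setIntegral_mono_on
        · exact (Continuous.integrableOn_Icc (by fun_prop)).mono_set Set.Ioc_subset_Icc_self
        · exact (hI.const_mul _).integrableOn
        · exact measurableSet_Ioc
        · intro t ht
          rw [← Real.exp_add]
          apply Real.exp_le_exp.2
          have h1 := Real.cos_le_one_sub_mul_cos_sq (x := t) (abs_le.2 ⟨ht.1.le, ht.2⟩)
          have h2 := Real.neg_one_le_cos t
          nlinarith
    _ ≤ ∫ t : ℝ, Real.exp 2 * Real.exp (-(2 / π ^ 2 * (1 + A)) * t ^ 2) :=
        setIntegral_le_integral (hI.const_mul _) (ae_of_all _ fun x => by positivity)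
    _ = _ := by
        rw [integral_const_mul, integral_gaussian, mul_div_assoc, ← Real.sqrt_div (by positivity)]
        congr 2
        field_simp

/-- The number of occurrences of the symbol `x` in the word `xv`. -/
def cnt {a n : ℕ} (xv : Fin n → Fin a) (x : Fin a) : ℕ := #{i | xv i = x}

lemma prod_eq_prod_cnt {a n : ℕ} (xv : Fin n → Fin a) (g : Fin a → ℂ) :
    ∏ i, g (xv i) = ∏ x, g x ^ cnt xv x := by
  rw [← Finset.prod_fiberwise' univ xv g]
  simp [cnt]

/-- Fourier inversion: the total weight, under the product weights `r`, of the words with the same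
counts as `xv₀` is at most the integral of the modulus of the characteristic function. The angle
at `c` is set to zero, since the count of `c` is determined by the other counts. -/
lemma fourier_bound {a n : ℕ} (r : Fin n → Fin a → ℝ) (hr : ∀ i x, 0 ≤ r i x) (c : Fin a)
    (xv₀ : Fin n → Fin a) :
    (2 * π) ^ a * ∑ xv : Fin n → Fin a with cnt xv = cnt xv₀, ∏ i, r i (xv i) ≤
      ∫ t, ∏ i, ‖∑ x, (r i x : ℂ) *
        Complex.exp ((Function.update t c 0 x : ℝ) * Complex.I)‖ ∂(torus a) := by
  -- The unimodular phase which extracts the coefficient of the counts of `xv₀`.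
  set E : (Fin a → ℝ) → ℂ := fun t =>
    ∏ x, Complex.exp ((Function.update t c 0 x : ℝ) * Complex.I) ^ (-(cnt xv₀ x : ℤ)) with hE
  have hEn : ∀ t, ‖E t‖ = 1 := by
    intro t
    simp only [hE, norm_prod, norm_zpow, Complex.norm_exp_ofReal_mul_I]
    simp
  set e : (Fin n → Fin a) → Fin a → ℝ → ℂ := fun xv x t =>
    if x = c then 1 else Complex.exp (((cnt xv x - cnt xv₀ x : ℤ) : ℂ) * t * Complex.I) with he
  have hexp : ∀ t, (∏ i, ∑ x, (r i x : ℂ) *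
      Complex.exp ((Function.update t c 0 x : ℝ) * Complex.I)) * E t =
      ∑ xv : Fin n → Fin a, ((∏ i, r i (xv i) : ℝ) : ℂ) * ∏ x, e xv x (t x) := by
    intro t
    rw [Finset.prod_univ_sum, Fintype.piFinset_univ, sum_mul]
    refine sum_congr rfl fun xv _ => ?_
    rw [prod_mul_distrib, mul_assoc, Complex.ofReal_prod,
      prod_eq_prod_cnt xv (fun x => Complex.exp ((Function.update t c 0 x : ℝ) * Complex.I)),
      hE, ← prod_mul_distrib]
    congr 1
    refine prod_congr rfl fun x _ => ?_
    by_cases hx : x = c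
    · subst hx; simp [he]
    · simp only [he, hx, if_false, Function.update_of_ne hx]
      rw [← zpow_natCast, ← zpow_add₀ (Complex.exp_ne_zero _), ← Complex.exp_int_mul]
      congr 1
      push_cast
      ring
  have hec : ∀ xv x, Continuous (e xv x) := by
    intro xv x
    simp only [he]
    split_ifs <;> fun_prop
  have hint1 : ∀ xv x, Integrable (e xv x) (volume.restrict (Set.Ioc (-π) π)) := fun xv x =>
    ((hec xv x).integrableOn_Icc).mono_set Set.Ioc_subset_Icc_self
  have hintp : ∀ xv, Integrable (fun t : Fin a → ℝ => ∏ x, e xv x (t x)) (torus a) := fun xv =>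
    Integrable.fintype_prod (fun x => hint1 xv x)
  have hval : ∀ xv, ∫ t, ∏ x, e xv x (t x) ∂(torus a) =
      if (∀ x, x ≠ c → cnt xv x = cnt xv₀ x) then (((2 * π) ^ a : ℝ) : ℂ) else 0 := by
    intro xv
    unfold torus
    rw [integral_fintype_prod_eq_prod]
    have h1 : ∀ x, ∫ t in Set.Ioc (-π) π, e xv x t =
        if (x ≠ c → cnt xv x = cnt xv₀ x) then ((2 * π : ℝ) : ℂ) else 0 := by
      intro x
      by_cases hx : x = c
      · simp only [he, hx, if_true]
        simp [Real.pi_pos.le]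
        ring
      · simp only [he, hx, if_false]
        rw [integral_torus_char]
        simp [hx, sub_eq_zero]
    simp_rw [h1]
    split_ifs with h
    · rw [prod_congr rfl (fun x _ => if_pos (h x))]
      simp
    · push Not at h
      obtain ⟨x, hx, hx2⟩ := h
      exact prod_eq_zero (mem_univ x) (if_neg (by simp [hx, hx2]))
  have htot : ∫ t, (∏ i, ∑ x, (r i x : ℂ) *
      Complex.exp ((Function.update t c 0 x : ℝ) * Complex.I)) * E t ∂(torus a) =
      (((2 * π) ^ a * ∑ xv : Fin n → Fin a with (∀ x, x ≠ c → cnt xv x = cnt xv₀ x),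
        ∏ i, r i (xv i) : ℝ) : ℂ) := by
    simp_rw [hexp]
    rw [integral_finsetSum _ (fun xv _ => (hintp xv).const_mul _)]
    simp_rw [integral_const_mul, hval]
    push_cast
    rw [mul_sum, sum_filter]
    refine sum_congr rfl fun xv _ => ?_
    split_ifs <;> ring
  have hmono : ∑ xv : Fin n → Fin a with cnt xv = cnt xv₀, ∏ i, r i (xv i) ≤
      ∑ xv : Fin n → Fin a with (∀ x, x ≠ c → cnt xv x = cnt xv₀ x), ∏ i, r i (xv i) := by
    apply sum_le_sum_of_subset_of_nonneg
    · intro xv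
      simp only [mem_filter, mem_univ, true_and]
      intro h x _
      rw [h]
    · intro xv _ _
      exact prod_nonneg fun i _ => hr i _
  calc _ ≤ (2 * π) ^ a * ∑ xv : Fin n → Fin a with (∀ x, x ≠ c → cnt xv x = cnt xv₀ x),
        ∏ i, r i (xv i) := by
        have := Real.pi_pos
        gcongr
    _ ≤ ‖∫ t, (∏ i, ∑ x, (r i x : ℂ) *
      Complex.exp ((Function.update t c 0 x : ℝ) * Complex.I)) * E t ∂(torus a)‖ := by
        rw [htot, Complex.norm_real]
        exact le_abs_self _
    _ ≤ _ := by
        refine (norm_integral_le_integral_norm _).trans (le_of_eq ?_)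
        congr 1
        funext t
        rw [norm_mul, hEn, mul_one, norm_prod]

/-- The constant `e² √(π³/2) / (2π)` of the one-dimensional bound `exp_cos_integral_le`, normalised
by the length `2π` of the circle. -/
def Kc : ℝ := Real.exp 2 * √(π ^ 3 / 2) / (2 * π)

lemma Kc_pos : 0 < Kc := by unfold Kc; have := Real.pi_pos; positivity

/-- The product over the symbols `x ≠ c` of `Kc / √(1 + A |p x|)`: an upper bound, with `A`
proportional to `n`, for the probability that a frequency vector takes a given value. The absolute
value makes it continuous and bounded off the simplex as well. -/
def spread {a : ℕ} (A : ℝ) (p : Fin a → ℝ) (c : Fin a) : ℝ :=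
  ∏ x ∈ univ.erase c, Kc / √(1 + A * |p x|)

lemma spread_nonneg {a : ℕ} (A : ℝ) (p : Fin a → ℝ) (c : Fin a) : 0 ≤ spread A p c :=
  prod_nonneg fun _ _ => div_nonneg Kc_pos.le (Real.sqrt_nonneg _)

lemma spread_le {a : ℕ} {A : ℝ} (hA : 0 ≤ A) (p : Fin a → ℝ) (c : Fin a) :
    spread A p c ≤ ∏ _x ∈ univ.erase c, Kc := by
  refine prod_le_prod (fun _ _ => div_nonneg Kc_pos.le (Real.sqrt_nonneg _)) fun x _ => ?_
  apply div_le_self Kc_pos.le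
  rw [Real.one_le_sqrt]
  have := mul_nonneg hA (abs_nonneg (p x))
  linarith

lemma spread_continuous {a : ℕ} {A : ℝ} (hA : 0 ≤ A) (c : Fin a) :
    Continuous fun p : Fin a → ℝ => spread A p c := by
  unfold spread
  refine continuous_finsetProd _ fun x _ => ?_
  refine Continuous.div (by fun_prop) (by fun_prop) fun p => ?_
  have := mul_nonneg hA (abs_nonneg (p x))
  exact (Real.sqrt_pos.2 (by linarith)).ne'

/-- Given `p` and `y`, no value of the counts has conditional probability larger than `spread`:
the left side is the joint probability of `y` and the counts of `xv₀`, while `lik Q y p` is the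
probability of `y`. Here `c` is any coordinate with `p c ≥ 1/a`. -/
lemma local_bound {a b n : ℕ} (Q : Matrix (Fin b) (Fin a) ℝ) {δ : ℝ} (hδ : 0 < δ)
    (hQ : ∀ y x, δ ≤ Q y x) (hQ1 : ∀ y x, Q y x ≤ 1) {p : Fin a → ℝ} (hp : p ∈ simplex a)
    (c : Fin a) (hc : 1 / (a : ℝ) ≤ p c) (y : Fin n → Fin b) (xv₀ : Fin n → Fin a) :
    ∑ xv : Fin n → Fin a with cnt xv = cnt xv₀, ∏ i, p (xv i) * Q (y i) (xv i) ≤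
      lik Q y p * spread (n * (δ ^ 2 / a)) p c := by
  obtain ⟨hp0, hp1⟩ := hp
  have hπ := Real.pi_pos
  have hlik : lik Q y p = ∏ i, ∑ x, p x * Q (y i) x := by
    unfold lik
    refine prod_congr rfl fun i _ => ?_
    simp only [Matrix.mulVec, dotProduct]
    exact sum_congr rfl fun x _ => mul_comm _ _
  have hlik0 : 0 ≤ lik Q y p := by
    rw [hlik]
    exact prod_nonneg fun i _ => sum_nonneg fun x _ => mul_nonneg (hp0 x) (hδ.le.trans (hQ _ _))
  have h1 := fourier_bound (fun i x => p x * Q (y i) x)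
    (fun i x => mul_nonneg (hp0 x) (hδ.le.trans (hQ _ _))) c xv₀
  set A : ℝ := n * (δ ^ 2 / a) with hA
  have hA0 : 0 ≤ A := by positivity
  set h : Fin a → ℝ → ℝ := fun x t =>
    if x = c then 1 else Real.exp (-(A * p x * (1 - Real.cos t))) with hh
  have hhc : ∀ x, Continuous (h x) := by
    intro x; simp only [hh]; split_ifs <;> fun_prop
  have h2 : ∀ t : Fin a → ℝ, ∏ i, ‖∑ x, ((p x * Q (y i) x : ℝ) : ℂ) *
        Complex.exp ((Function.update t c 0 x : ℝ) * Complex.I)‖ ≤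
        lik Q y p * ∏ x, h x (t x) := by
    intro t
    have : ∏ x, h x (t x) = ∏ _i : Fin n,
        Real.exp (-(δ ^ 2 / a * ∑ x, p x * (1 - Real.cos (Function.update t c 0 x)))) := by
      rw [prod_const, card_univ, Fintype.card_fin, ← Real.exp_nat_mul, mul_neg, mul_sum, mul_sum,
        ← sum_neg_distrib, Real.exp_sum]
      refine prod_congr rfl fun x _ => ?_
      by_cases hx : x = c
      · subst hx; simp [hh]
      · simp only [hh, hx, if_false, Function.update_of_ne hx]
        congr 1; rw [hA]; ring
    rw [this, hlik, ← prod_mul_distrib]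
    refine prod_le_prod (fun _ _ => norm_nonneg _) fun i _ => ?_
    exact char_bound p (Q (y i)) hδ hp0 hp1 (hQ _) (hQ1 _) c hc _ (Function.update_self ..)
  have hint : ∀ x, Integrable (h x) (volume.restrict (Set.Ioc (-π) π)) := fun x =>
    ((hhc x).integrableOn_Icc).mono_set Set.Ioc_subset_Icc_self
  have h3 : ∫ t, ∏ i, ‖∑ x, ((p x * Q (y i) x : ℝ) : ℂ) *
        Complex.exp ((Function.update t c 0 x : ℝ) * Complex.I)‖ ∂(torus a) ≤
        lik Q y p * ∏ x, ∫ t in Set.Ioc (-π) π, h x t := by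
    have h4 : ∏ x, ∫ t in Set.Ioc (-π) π, h x t = ∫ t, ∏ x, h x (t x) ∂(torus a) := by
      unfold torus
      rw [integral_fintype_prod_eq_prod]
    rw [h4, ← integral_const_mul]
    refine integral_mono_of_nonneg (ae_of_all _ fun t => prod_nonneg fun i _ => norm_nonneg _)
      ?_ (ae_of_all _ h2)
    exact (Integrable.fintype_prod hint).const_mul _
  have h5 : ∏ x, ∫ t in Set.Ioc (-π) π, h x t ≤ (2 * π) ^ a * spread A p c := by
    have e1 : ((2 * π) ^ a : ℝ) = ∏ _x : Fin a, (2 * π) := by simp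
    rw [e1, ← mul_prod_erase univ (fun _ => 2 * π) (mem_univ c),
      ← mul_prod_erase univ _ (mem_univ c), spread, mul_assoc, ← prod_mul_distrib]
    have hhcc : ∫ t in Set.Ioc (-π) π, h c t = 2 * π := by
      simp [hh, hπ.le]; ring
    rw [hhcc]
    refine mul_le_mul_of_nonneg_left (prod_le_prod
      (fun x _ => integral_nonneg fun t => ?_) fun x hx => ?_) (by positivity)
    · simp only [hh]; split_ifs <;> positivity
    · have hx' : x ≠ c := ne_of_mem_erase hx
      simp only [hh, hx', if_false]
      refine (exp_cos_integral_le (mul_nonneg hA0 (hp0 x))).trans (le_of_eq ?_)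
      rw [abs_of_nonneg (hp0 x), Kc]
      field_simp
  have h6 := (h1.trans h3).trans (mul_le_mul_of_nonneg_left h5 hlik0)
  have h7 : lik Q y p * ((2 * π) ^ a * spread A p c) =
    (2 * π) ^ a * (lik Q y p * spread A p c) := by ring
  rw [h7] at h6
  exact le_of_mul_le_mul_left h6 (by positivity)

lemma exists_large_coord {a : ℕ} {p : Fin a → ℝ} (hp : p ∈ simplex a) :
    ∃ c, 1 / (a : ℝ) ≤ p c := by
  by_contra! h
  have ha : 0 < a := by
    rcases Nat.eq_zero_or_pos a with rfl | h0
    · have := hp.2; simp at this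
    · exact h0
  have : ∑ x, p x < ∑ _x : Fin a, 1 / (a : ℝ) :=
    sum_lt_sum_of_nonempty ⟨⟨0, ha⟩, mem_univ _⟩ fun x _ => h x
  rw [hp.2] at this
  simp at this
  rw [mul_inv_cancel₀ (by positivity)] at this
  exact lt_irrefl _ this

/-- The bound `local_bound` summed over `c`, which removes the choice of a large coordinate and
keeps the right side continuous in `p`. -/
lemma local_bound' {a b n : ℕ} (Q : Matrix (Fin b) (Fin a) ℝ) {δ : ℝ} (hδ : 0 < δ)
    (hQ : ∀ y x, δ ≤ Q y x) (hQ1 : ∀ y x, Q y x ≤ 1) {p : Fin a → ℝ} (hp : p ∈ simplex a)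
    (y : Fin n → Fin b) (xv₀ : Fin n → Fin a) :
    ∑ xv : Fin n → Fin a with cnt xv = cnt xv₀, ∏ i, p (xv i) * Q (y i) (xv i) ≤
      lik Q y p * ∑ c, spread (n * (δ ^ 2 / a)) p c := by
  obtain ⟨c, hc⟩ := exists_large_coord hp
  refine (local_bound Q hδ hQ hQ1 hp c hc y xv₀).trans ?_
  refine mul_le_mul_of_nonneg_left
    (single_le_sum (fun c _ => spread_nonneg _ p c) (mem_univ c)) ?_
  refine prod_nonneg fun i _ => ?_
  simp only [Matrix.mulVec, dotProduct]
  exact sum_nonneg fun x _ => mul_nonneg (hδ.le.trans (hQ _ _)) (hp.1 x)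

/-! ### Integrating the local bound over the simplex -/

lemma integral_inv_sqrt_le {A : ℝ} (hA : 0 < A) :
    ∫ t in Set.Icc (0 : ℝ) 1, Kc / √(1 + A * |t|) ≤ 2 * Kc / √A := by
  rw [integral_Icc_eq_integral_Ioc, ← intervalIntegral.integral_of_le zero_le_one]
  have hd : ∀ t ∈ Set.uIcc (0 : ℝ) 1,
      HasDerivAt (fun t => 2 * Kc / A * √(1 + A * t)) (Kc / √(1 + A * |t|)) t := by
    intro t ht
    rw [Set.uIcc_of_le zero_le_one] at ht
    have ht0 := ht.1
    have hpos : 0 < 1 + A * t := by positivity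
    have h1 : HasDerivAt (fun t => 1 + A * t) (A * 1) t :=
      ((hasDerivAt_id t).const_mul A).const_add 1
    have h2 := (h1.sqrt hpos.ne').const_mul (2 * Kc / A)
    have e : 2 * Kc / A * (A * 1 / (2 * √(1 + A * t))) = Kc / √(1 + A * |t|) := by
      rw [abs_of_nonneg ht0]
      field_simp
    rwa [e] at h2
  have hcont : Continuous fun t : ℝ => Kc / √(1 + A * |t|) := by
    refine Continuous.div (by fun_prop) (by fun_prop) fun t => ?_
    exact (Real.sqrt_pos.2 (by positivity)).ne'
  rw [intervalIntegral.integral_eq_sub_of_hasDerivAt hd (hcont.intervalIntegrable _ _)]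
  have hs : √(1 + A) ≤ 1 + √A := by
    rw [Real.sqrt_le_left (by positivity)]
    nlinarith [Real.sq_sqrt hA.le, Real.sqrt_nonneg A]
  have hK := Kc_pos
  have e : 2 * Kc / √A = 2 * Kc / A * √A := by
    have := Real.sq_sqrt hA.le
    field_simp
    linarith
  rw [e]
  simp only [mul_one, mul_zero, add_zero, Real.sqrt_one]
  have h3 : 0 < 2 * Kc / A := by positivity
  nlinarith

/-- The involution of the corner simplex which exchanges the barycentric coordinate `j` with the last
one, `1 - ∑ i, q i`. -/
def reflect {m : ℕ} (j : Fin m) (q : Fin m → ℝ) : Fin m → ℝ :=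
  Function.update q j (1 - ∑ i, q i)

lemma sum_reflect {m : ℕ} (j : Fin m) (q : Fin m → ℝ) : ∑ i, reflect j q i = 1 - q j := by
  unfold reflect
  rw [sum_update_of_mem (mem_univ j), ← Finset.add_sum_erase univ q (mem_univ j), erase_eq]
  ring

lemma reflect_reflect {m : ℕ} (j : Fin m) (q : Fin m → ℝ) : reflect j (reflect j q) = q := by
  conv_lhs => rw [reflect, sum_reflect]
  unfold reflect
  simp

/-- The linear part of `reflect j` squares to the identity, so its determinant is `±1`. -/
lemma reflect_measurePreserving {m : ℕ} (j : Fin m) :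
    MeasurePreserving (reflect j) (volume : Measure (Fin m → ℝ)) volume := by
  set M : Matrix (Fin m) (Fin m) ℝ := Matrix.updateRow 1 j (fun _ => -1) with hM
  have hMv : ∀ q, M *ᵥ q = Function.update q j (-∑ i, q i) := by
    intro q
    funext i
    by_cases hi : i = j
    · subst hi; simp [hM, Matrix.mulVec, dotProduct]
    · simp only [hM, Matrix.mulVec, Matrix.updateRow_ne hi, Function.update_of_ne hi]
      simp [dotProduct, Matrix.one_apply]
  have hMM : M * M = 1 := by
    apply Matrix.ext_of_mulVec_single
    intro i
    rw [← Matrix.mulVec_mulVec, hMv, hMv, Matrix.one_mulVec, sum_update_of_mem (mem_univ j),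
      ← Finset.add_sum_erase univ _ (mem_univ j), erase_eq]
    simp
  have hdet : M.det * M.det = 1 := by rw [← Matrix.det_mul, hMM, Matrix.det_one]
  have hdet0 : M.det ≠ 0 := by intro h; rw [h] at hdet; simp at hdet
  have habs : |M.det⁻¹| = 1 := by
    rw [abs_inv]
    have : |M.det| = 1 := by
      rcases mul_self_eq_one_iff.1 hdet with h | h <;> simp [h]
    rw [this, inv_one]
  have h1 : MeasurePreserving (Matrix.toLin' M) (volume : Measure (Fin m → ℝ)) volume := by
    refine ⟨?_, ?_⟩
    · exact (LinearMap.continuous_of_finiteDimensional _).measurable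
    · rw [Real.map_matrix_volume_pi_eq_smul_volume_pi hdet0, habs]; simp
  have h2 := (measurePreserving_add_right (volume : Measure (Fin m → ℝ)) (Pi.single j 1)).comp h1
  convert h2 using 1
  funext q i
  by_cases hi : i = j
  · subst hi
    simp [reflect, Matrix.toLin'_apply, hMv]; ring
  · simp [reflect, Matrix.toLin'_apply, hMv, hi]

lemma reflect_mem {m : ℕ} (j : Fin m) {q : Fin m → ℝ} (hq : q ∈ stdCorner m) :
    reflect j q ∈ stdCorner m := by
  refine ⟨fun i => ?_, ?_⟩
  · by_cases hi : i = j
    · subst hi; simp [reflect]; exact hq.2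
    · simp [reflect, hi]; exact hq.1 i
  · rw [sum_reflect]; linarith [hq.1 j]

lemma reflect_preimage {m : ℕ} (j : Fin m) : reflect j ⁻¹' stdCorner m = stdCorner m := by
  ext q
  refine ⟨fun h => ?_, fun h => reflect_mem j h⟩
  have := reflect_mem j h
  rwa [reflect_reflect] at this

lemma setIntegral_reflect {m : ℕ} (j : Fin m) (g : (Fin m → ℝ) → ℝ) :
    ∫ q in stdCorner m, g (reflect j q) = ∫ q in stdCorner m, g q := by
  have hmp := reflect_measurePreserving j
  let e : (Fin m → ℝ) ≃ᵐ (Fin m → ℝ) :=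
    { toFun := reflect j, invFun := reflect j, left_inv := reflect_reflect j,
      right_inv := reflect_reflect j, measurable_toFun := hmp.measurable,
      measurable_invFun := hmp.measurable }
  have := hmp.setIntegral_preimage_emb e.measurableEmbedding g (stdCorner m)
  rwa [reflect_preimage] at this

lemma stdCorner_subset (m : ℕ) :
    stdCorner m ⊆ Set.univ.pi fun _ : Fin m => Set.Icc (0 : ℝ) 1 := by
  intro q hq i _
  exact ⟨hq.1 i, (single_le_sum (fun i _ => hq.1 i) (mem_univ i)).trans hq.2⟩

lemma stdCorner_isClosed (m : ℕ) : IsClosed (stdCorner m) := by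
  have : stdCorner m = (⋂ i, {q | 0 ≤ q i}) ∩ {q | ∑ i, q i ≤ 1} := by
    ext q; simp [stdCorner]
  rw [this]
  exact (isClosed_iInter fun i => isClosed_le (by fun_prop) (by fun_prop)).inter
    (isClosed_le (by fun_prop) (by fun_prop))

lemma stdCorner_isCompact (m : ℕ) : IsCompact (stdCorner m) :=
  (isCompact_univ_pi fun _ => isCompact_Icc).of_isClosed_subset (stdCorner_isClosed m)
    (stdCorner_subset m)

lemma emb_continuous (a : ℕ) : Continuous (emb a) := by
  refine continuous_pi fun x => ?_
  unfold emb
  by_cases h : (x : ℕ) < a - 1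
  · simp only [h, dif_pos]; fun_prop
  · simp only [h, dif_neg, not_false_iff]; fun_prop

lemma emb_castSucc {m : ℕ} (q : Fin m → ℝ) (i : Fin m) :
    emb (m + 1) q i.castSucc = q i := by
  simp [emb]

lemma emb_last {m : ℕ} (q : Fin m → ℝ) : emb (m + 1) q (Fin.last m) = 1 - ∑ i, q i := by
  simp [emb]

lemma emb_mem_simplex {m : ℕ} {q : Fin m → ℝ} (hq : q ∈ stdCorner m) :
    emb (m + 1) q ∈ simplex (m + 1) := by
  refine ⟨fun x => ?_, ?_⟩
  · refine Fin.lastCases ?_ (fun i => ?_) x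
    · rw [emb_last]; linarith [hq.2]
    · rw [emb_castSucc]; exact hq.1 i
  · rw [Fin.sum_univ_castSucc]
    simp only [emb_castSucc, emb_last]; ring

lemma prod_erase_last {m : ℕ} (g : Fin (m + 1) → ℝ) :
    ∏ x ∈ univ.erase (Fin.last m), g x = ∏ i : Fin m, g i.castSucc := by
  have : univ.erase (Fin.last m) = univ.map Fin.castSuccEmb := by
    ext x
    simp only [mem_erase, mem_univ, and_true, Finset.mem_map, true_and]
    constructor
    · intro h; exact ⟨x.castPred h, by simp⟩
    · rintro ⟨i, rfl⟩; exact (Fin.castSucc_lt_last i).ne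
  rw [this, prod_map]
  rfl

/-- For `c` the last coordinate the integrand is a product over the free coordinates, so the simplex
can be enlarged to the cube `[0,1]^m` and the integral factorises. -/
lemma integral_spread_last_le {m : ℕ} {A : ℝ} (hA : 0 < A) :
    ∫ q in stdCorner m, spread A (emb (m + 1) q) (Fin.last m) ≤ (2 * Kc / √A) ^ m := by
  have h0 : ∀ q : Fin m → ℝ, spread A (emb (m + 1) q) (Fin.last m) =
      ∏ i, Kc / √(1 + A * |q i|) := by
    intro q
    rw [spread, prod_erase_last]
    simp only [emb_castSucc]
  have hcont : Continuous fun t : ℝ => Kc / √(1 + A * |t|) := by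
    refine Continuous.div (by fun_prop) (by fun_prop) fun t => ?_
    exact (Real.sqrt_pos.2 (by positivity)).ne'
  simp_rw [h0]
  calc _ ≤ ∫ q in Set.univ.pi fun _ : Fin m => Set.Icc (0 : ℝ) 1,
        ∏ i, Kc / √(1 + A * |q i|) := by
        refine setIntegral_mono_set ?_ (ae_of_all _ fun q => prod_nonneg fun i _ => ?_)
          (stdCorner_subset m).eventuallyLE
        · exact (continuous_finsetProd _ fun i _ =>
            hcont.comp (continuous_apply i)).continuousOn.integrableOn_compact
            (isCompact_univ_pi fun _ => isCompact_Icc)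
        · exact div_nonneg Kc_pos.le (Real.sqrt_nonneg _)
    _ = ∏ _i : Fin m, ∫ t in Set.Icc (0 : ℝ) 1, Kc / √(1 + A * |t|) := by
        rw [volume_pi, Measure.restrict_pi_pi]
        exact integral_fintype_prod_eq_prod (𝕜 := ℝ)
          (fun _ : Fin m => fun t : ℝ => Kc / √(1 + A * |t|))
    _ ≤ _ := by
        rw [prod_const, card_univ, Fintype.card_fin]
        refine pow_le_pow_left₀ (integral_nonneg fun t =>
          div_nonneg Kc_pos.le (Real.sqrt_nonneg _)) (integral_inv_sqrt_le hA) m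

/-- The case of a general `c` reduces to the last coordinate by a volume-preserving `reflect`. -/
lemma integral_spread_le {m : ℕ} {A : ℝ} (hA : 0 < A) (c : Fin (m + 1)) :
    ∫ q in stdCorner m, spread A (emb (m + 1) q) c ≤ (2 * Kc / √A) ^ m := by
  refine Fin.lastCases (integral_spread_last_le hA) (fun j => ?_) c
  refine le_trans (le_of_eq ?_) (integral_spread_last_le hA)
  rw [← setIntegral_reflect j]
  congr 1
  funext q
  unfold spread
  refine prod_equiv (Equiv.swap j.castSucc (Fin.last m)) ?_ ?_
  · intro x
    simp only [mem_erase, mem_univ, and_true, ne_eq]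
    rw [not_iff_not, Equiv.swap_apply_eq_iff, Equiv.swap_apply_right]
  · intro x hx
    congr 5
    have hx' : x ≠ j.castSucc := ne_of_mem_erase hx
    revert hx'
    refine Fin.lastCases (fun _ => ?_) (fun i hi => ?_) x
    · rw [Equiv.swap_apply_right, emb_last, emb_castSucc, sum_reflect]; ring
    · rw [Equiv.swap_apply_of_ne_of_ne hi (Fin.castSucc_lt_last i).ne, emb_castSucc, emb_castSucc]
      have : i ≠ j := fun h => hi (by rw [h])
      simp [reflect, this]

/-! ### The joint law of data and observations -/

lemma simplex_isClosed (a : ℕ) : IsClosed (simplex a) := by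
  have : simplex a = (⋂ i, {q | 0 ≤ q i}) ∩ {q | ∑ i, q i = 1} := by
    ext q; simp [simplex]
  rw [this]
  exact (isClosed_iInter fun i => isClosed_le (by fun_prop) (by fun_prop)).inter
    (isClosed_eq (by fun_prop) (by fun_prop))

lemma simplex_isCompact (a : ℕ) : IsCompact (simplex a) := by
  refine (isCompact_univ_pi fun _ => isCompact_Icc (a := (0 : ℝ)) (b := 1)).of_isClosed_subset
    (simplex_isClosed a) ?_
  intro p hp x _
  exact ⟨hp.1 x, (single_le_sum (fun i _ => hp.1 i) (mem_univ x)).trans hp.2.le⟩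

lemma ae_mem_simplex {m : ℕ} {μ : Measure (Fin (m + 1) → ℝ)} [IsProbabilityMeasure μ]
    {f : (Fin m → ℝ) → ℝ} (hf : IsContDensity (a := m + 1) μ f) :
    ∀ᵐ p ∂μ, p ∈ simplex (m + 1) := by
  have hms : MeasurableSet (simplex (m + 1)) := (simplex_isClosed _).measurableSet
  have h := hf.2.2.2 (Set.indicator (simplex (m + 1)) 1)
    ((measurable_one).indicator hms) ⟨1, fun p => by
      by_cases hp : p ∈ simplex (m + 1) <;> simp [hp]⟩
  rw [integral_indicator_one hms] at h
  have h2 : ∫ q in stdCorner m, Set.indicator (simplex (m + 1)) 1 (emb (m + 1) q) * f q =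
      ∫ q in stdCorner m, f q := by
    refine setIntegral_congr_fun (stdCorner_isClosed m).measurableSet fun q hq => ?_
    simp [emb_mem_simplex hq]
  have h3 : μ.real (simplex (m + 1)) = 1 := h.trans (h2.trans hf.2.2.1)
  have h4 : μ (simplex (m + 1)) = 1 := by
    rw [measureReal_def, ENNReal.toReal_eq_one_iff] at h3
    exact h3
  exact mem_ae_iff.2 ((prob_compl_eq_zero_iff hms).2 h4)

section
variable {a b n : ℕ} {Q : Matrix (Fin b) (Fin a) ℝ} {μ : Measure (Fin a → ℝ)}

lemma integrable_of_continuous [IsProbabilityMeasure μ] (hμ : ∀ᵐ p ∂μ, p ∈ simplex a)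
    {g : (Fin a → ℝ) → ℝ} (hg : Continuous g) : Integrable g μ := by
  obtain ⟨C, hC⟩ := (simplex_isCompact a).exists_bound_of_continuousOn hg.continuousOn
  exact Integrable.of_bound hg.aestronglyMeasurable C (hμ.mono fun p hp => hC p hp)

/-- The channel part of the joint weight does not depend on `p` and factors out. -/
lemma wgt_eq (xv : Fin n → Fin a) (y : Fin n → Fin b) :
    wgt Q μ xv y = (∏ i, Q (y i) (xv i)) * ∫ p, ∏ i, p (xv i) ∂μ := by
  unfold wgt
  rw [← integral_const_mul]
  congr 1
  funext p
  rw [prod_mul_distrib, mul_comm]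

lemma integral_prod_nonneg (hμ : ∀ᵐ p ∂μ, p ∈ simplex a) (xv : Fin n → Fin a) :
    0 ≤ ∫ p, ∏ i, p (xv i) ∂μ :=
  integral_nonneg_of_ae (hμ.mono fun _ hp => prod_nonneg fun _ _ => hp.1 _)

lemma wgt_nonneg (hμ : ∀ᵐ p ∂μ, p ∈ simplex a) (hQ : ∀ y x, 0 < Q y x)
    (xv : Fin n → Fin a) (y : Fin n → Fin b) : 0 ≤ wgt Q μ xv y := by
  rw [wgt_eq]
  exact mul_nonneg (prod_nonneg fun i _ => (hQ _ _).le) (integral_prod_nonneg hμ xv)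

lemma sum_integral_prod [IsProbabilityMeasure μ] (hμ : ∀ᵐ p ∂μ, p ∈ simplex a) :
    ∑ xv : Fin n → Fin a, ∫ p, ∏ i, p (xv i) ∂μ = 1 := by
  rw [← integral_finsetSum _ fun xv _ => integrable_of_continuous hμ (by fun_prop)]
  have : ∀ᵐ p ∂μ, ∑ xv : Fin n → Fin a, ∏ i, p (xv i) = 1 := hμ.mono fun p hp => by
    rw [← Fintype.sum_pow, hp.2, one_pow]
  rw [integral_congr_ae this]
  simp

lemma sum_prod_channel (hQcol : ∀ x, ∑ y, Q y x = 1) (xv : Fin n → Fin a) :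
    ∑ y : Fin n → Fin b, ∏ i, Q (y i) (xv i) = 1 :=
  (pi_second_moment n (fun i y => Q y (xv i)) (fun _ _ => 0) (fun i => hQcol _) (by simp)).1

lemma sum_wgt [IsProbabilityMeasure μ] (hμ : ∀ᵐ p ∂μ, p ∈ simplex a)
    (hQcol : ∀ x, ∑ y, Q y x = 1) :
    ∑ y : Fin n → Fin b, ∑ xv : Fin n → Fin a, wgt Q μ xv y = 1 := by
  rw [sum_comm]
  simp_rw [wgt_eq, ← sum_mul, sum_prod_channel hQcol, one_mul]
  exact sum_integral_prod hμ

lemma freqVec_apply (xv : Fin n → Fin a) (x : Fin a) : freqVec xv x = (cnt xv x : ℝ) / n := rfl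

lemma freqVec_eq_iff (hn : 0 < n) (xv xv' : Fin n → Fin a) :
    freqVec xv = freqVec xv' ↔ cnt xv = cnt xv' := by
  have hn' : (n : ℝ) ≠ 0 := by positivity
  constructor
  · intro h
    funext x
    have := congrFun h x
    rw [freqVec_apply, freqVec_apply, div_left_inj' hn'] at this
    exact_mod_cast this
  · intro h
    funext x
    rw [freqVec_apply, freqVec_apply, h]

lemma Pphi_freqVec (hn : 0 < n) (xv₀ : Fin n → Fin a) (y : Fin n → Fin b) :
    Pphi Q μ (freqVec xv₀) y = ∑ xv : Fin n → Fin a with cnt xv = cnt xv₀, wgt Q μ xv y := by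
  unfold Pphi
  refine sum_congr ?_ fun _ _ => rfl
  ext xv
  simp [freqVec_eq_iff hn]

open Classical in
lemma sum_Pphi_mul (y : Fin n → Fin b) (g : (Fin a → ℝ) → ℝ) :
    ∑ φ ∈ univ.image (freqVec (a := a) (n := n)), Pphi Q μ φ y * g φ =
      ∑ xv : Fin n → Fin a, wgt Q μ xv y * g (freqVec xv) := by
  rw [← sum_fiberwise_of_maps_to (g := freqVec (a := a) (n := n))
    (t := univ.image (freqVec (a := a) (n := n))) (fun xv _ => mem_image_of_mem _ (mem_univ _))]
  refine sum_congr rfl fun φ _ => ?_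
  unfold Pphi
  rw [sum_mul]
  refine sum_congr (by congr) fun xv hxv => ?_
  rw [(mem_filter.1 hxv).2]

lemma Pphi_nonneg (hμ : ∀ᵐ p ∂μ, p ∈ simplex a) (hQ : ∀ y x, 0 < Q y x)
    (φ : Fin a → ℝ) (y : Fin n → Fin b) : 0 ≤ Pphi Q μ φ y := by
  unfold Pphi
  exact sum_nonneg fun xv _ => wgt_nonneg hμ hQ xv y

open Classical in
lemma HFcond_eq (n : ℕ) : HFcond Q μ n = -(∑ y : (Fin n → Fin b),
    ∑ φ ∈ univ.image (freqVec (a := a) (n := n)), Pphi Q μ φ y * Real.log (Pphi Q μ φ y /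
        ∑ φ' ∈ univ.image (freqVec (a := a) (n := n)), Pphi Q μ φ' y)) := by
  unfold HFcond
  congr! 6

lemma sum_lik (hQcol : ∀ x, ∑ y, Q y x = 1) {p : Fin a → ℝ} (hp : p ∈ simplex a) :
    ∑ y : Fin n → Fin b, lik Q y p = 1 := by
  unfold lik
  rw [← Fintype.sum_pow]
  have : ∑ y, (Q *ᵥ p) y = 1 := by
    simp only [Matrix.mulVec, dotProduct]
    rw [sum_comm]
    simp_rw [← sum_mul, hQcol, one_mul]
    exact hp.2
  rw [this, one_pow]

lemma lik_continuous (y : Fin n → Fin b) : Continuous (lik Q y) := by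
  unfold lik
  simp only [Matrix.mulVec, dotProduct]
  fun_prop

/-! ### Lower bound on the conditional entropy -/

/-- Lower bound on the conditional entropy: `local_bound'` integrated against `μ` bounds each
`P(φ, y)` by a quantity depending on `y` only, whose sum over `y` is the integral of `spread`. -/
lemma HFcond_lower [IsProbabilityMeasure μ] (hμ : ∀ᵐ p ∂μ, p ∈ simplex a)
    (hQ : ∀ y x, 0 < Q y x) (hQcol : ∀ x, ∑ y, Q y x = 1) (hn : 0 < n) {δ : ℝ} (hδ : 0 < δ)
    (hQδ : ∀ y x, δ ≤ Q y x) {B : ℝ} (hB : 0 < B)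
    (hGB : ∫ p, ∑ c, spread (n * (δ ^ 2 / a)) p c ∂μ ≤ B) :
    -Real.log B ≤ HFcond Q μ n := by
  classical
  have hQ1 : ∀ y x, Q y x ≤ 1 := fun y x => by
    rw [← hQcol x]
    exact single_le_sum (f := fun y => Q y x) (fun y _ => (hQ y x).le) (mem_univ y)
  set A : ℝ := n * (δ ^ 2 / a) with hA
  have hA0 : 0 ≤ A := by positivity
  have hGc : Continuous fun p : Fin a → ℝ => ∑ c, spread A p c :=
    continuous_finsetSum _ fun c _ => spread_continuous hA0 c
  have hG0 : ∀ p : Fin a → ℝ, 0 ≤ ∑ c, spread A p c := fun p =>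
    sum_nonneg fun c _ => spread_nonneg A p c
  have hlik0 : ∀ (y : Fin n → Fin b), ∀ p ∈ simplex a, 0 ≤ lik Q y p := by
    intro y p hp
    refine prod_nonneg fun i _ => ?_
    simp only [Matrix.mulVec, dotProduct]
    exact sum_nonneg fun x _ => mul_nonneg (hQ _ _).le (hp.1 x)
  rw [HFcond_eq]
  refine entropy_lower univ _ (fun y φ => Pphi Q μ φ y)
    (fun y => ∫ p, lik Q y p * ∑ c, spread A p c ∂μ) hB
    (fun y _ φ _ => Pphi_nonneg hμ hQ φ y) ?_ ?_ ?_ ?_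
  · intro y _ φ hφ
    obtain ⟨xv₀, _, rfl⟩ := mem_image.1 hφ
    rw [Pphi_freqVec hn]
    unfold wgt
    rw [← integral_finsetSum _ fun xv _ => integrable_of_continuous hμ (by fun_prop)]
    refine integral_mono_ae (integrable_of_continuous hμ (by fun_prop))
      (integrable_of_continuous hμ ((lik_continuous y).mul hGc)) (hμ.mono fun p hp => ?_)
    exact local_bound' Q hδ hQδ hQ1 hp y xv₀
  · intro y _
    exact integral_nonneg_of_ae (hμ.mono fun p hp => mul_nonneg (hlik0 y p hp) (hG0 p))
  · have : ∀ y : Fin n → Fin b, ∑ φ ∈ univ.image (freqVec (a := a) (n := n)), Pphi Q μ φ y =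
        ∑ xv : Fin n → Fin a, wgt Q μ xv y := fun y => by
      simpa using sum_Pphi_mul (Q := Q) (μ := μ) y (fun _ => 1)
    simp_rw [this]
    exact sum_wgt hμ hQcol
  · have hi : ∀ y : Fin n → Fin b, Integrable (fun p => lik Q y p * ∑ c, spread A p c) μ :=
      fun y => integrable_of_continuous hμ ((lik_continuous y).mul hGc)
    rw [← integral_finsetSum _ fun y _ => hi y]
    refine le_trans (le_of_eq (integral_congr_ae (hμ.mono fun p hp => ?_))) hGB
    simp only [← sum_mul, sum_lik hQcol hp, one_mul]

end

lemma integral_spread_measure_le {m : ℕ} {μ : Measure (Fin (m + 1) → ℝ)} [IsProbabilityMeasure μ]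
    {f : (Fin m → ℝ) → ℝ} (hf : IsContDensity (a := m + 1) μ f) :
    ∃ M : ℝ, 0 < M ∧ ∀ A : ℝ, 0 < A →
      ∫ p, ∑ c, spread A p c ∂μ ≤ M * (2 * Kc / √A) ^ m := by
  obtain ⟨C, hC⟩ := (stdCorner_isCompact m).exists_bound_of_continuousOn hf.1
  have hms := (stdCorner_isClosed m).measurableSet
  refine ⟨(|C| + 1) * (m + 1), by positivity, fun A hA => ?_⟩
  have hGc : Continuous fun p : Fin (m + 1) → ℝ => ∑ c, spread A p c :=
    continuous_finsetSum _ fun c _ => spread_continuous hA.le c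
  have hcomp : ∀ c, Continuous fun q : Fin m → ℝ => spread A (emb (m + 1) q) c := fun c =>
    (spread_continuous hA.le c).comp (emb_continuous (m + 1))
  have hG0 : ∀ p : Fin (m + 1) → ℝ, 0 ≤ ∑ c, spread A p c := fun p =>
    sum_nonneg fun c _ => spread_nonneg A p c
  rw [hf.2.2.2 _ hGc.measurable ⟨∑ c : Fin (m + 1), ∏ _x ∈ univ.erase c, Kc, fun p => by
    rw [abs_of_nonneg (hG0 p)]
    exact sum_le_sum fun c _ => spread_le hA.le p c⟩]
  change ∫ q in stdCorner m, (∑ c, spread A (emb (m + 1) q) c) * f q ≤ _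
  calc _ ≤ ∫ q in stdCorner m, (∑ c, spread A (emb (m + 1) q) c) * (|C| + 1) := by
        refine integral_mono_of_nonneg (ae_of_all _ fun q => mul_nonneg (hG0 _) (hf.2.1 q))
          ?_ ((ae_restrict_mem hms).mono fun q hq => ?_)
        · exact ((continuous_finsetSum _ fun c _ => hcomp c).mul
            continuous_const).continuousOn.integrableOn_compact (stdCorner_isCompact m)
        · refine mul_le_mul_of_nonneg_left ?_ (hG0 _)
          have h1 := hC q hq
          have h2 := le_abs_self (f q)
          have h3 := le_abs_self C
          rw [Real.norm_eq_abs] at h1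
          linarith
    _ = (∑ c, ∫ q in stdCorner m, spread A (emb (m + 1) q) c) * (|C| + 1) := by
        rw [integral_mul_const, integral_finsetSum]
        exact fun c _ => (hcomp c).continuousOn.integrableOn_compact (stdCorner_isCompact m)
    _ ≤ (∑ _c : Fin (m + 1), (2 * Kc / √A) ^ m) * (|C| + 1) := by
        gcongr with c
        exact integral_spread_le hA c
    _ = _ := by simp; ring

/-! ### Upper bound on the conditional entropy -/

section
variable {a b n : ℕ} {Q : Matrix (Fin b) (Fin a) ℝ} {μ : Measure (Fin a → ℝ)}

lemma sum_cnt (xv : Fin n → Fin a) : ∑ x, cnt xv x = n := by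
  unfold cnt
  rw [← card_eq_sum_card_fiberwise (f := xv) (s := univ) (t := univ) (fun _ _ => mem_univ _)]
  simp

open Classical in
/-- A product of one-dimensional subprobabilities over all coordinates but `α` is a subprobability
on the set of frequency vectors: the count at `α` is determined by the others, so forgetting it is
injective. -/
lemma sum_image_freqVec_le (hn : 0 < n) (α : Fin a) (g : Fin a → ℝ → ℝ) (hg : ∀ x t, 0 ≤ g x t)
    (hg1 : ∀ x, ∑ k ∈ range (n + 1), g x k ≤ 1) :
    ∑ φ ∈ univ.image (freqVec (a := a) (n := n)), ∏ x ∈ univ.erase α, g x (n * φ x) ≤ 1 := by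
  have hn' : (n : ℝ) ≠ 0 := by positivity
  -- `κ φ` lists the counts of `φ` with the one at `α` replaced by `0`.
  set κ : (Fin a → ℝ) → Fin a → ℕ := fun φ x => if x = α then 0 else ⌊n * φ x⌋₊ with hκ
  set F : (Fin a → ℕ) → ℝ := fun k => ∏ x, if x = α then 1 else g x (k x) with hF
  have hnf : ∀ (xv : Fin n → Fin a) x, (n : ℝ) * freqVec xv x = cnt xv x := fun xv x => by
    rw [freqVec_apply]; field_simp
  have hκx : ∀ (xv : Fin n → Fin a) x, κ (freqVec xv) x = if x = α then 0 else cnt xv x := by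
    intro xv x
    simp only [hκ, hnf, Nat.floor_natCast]
  have hle : ∀ (xv : Fin n → Fin a) x, cnt xv x ≤ n := fun xv x => by
    conv_rhs => rw [← sum_cnt xv]
    exact single_le_sum (f := cnt xv) (fun _ _ => Nat.zero_le _) (mem_univ x)
  have hinj : Set.InjOn κ (univ.image (freqVec (a := a) (n := n))) := by
    intro φ hφ φ' hφ' h
    obtain ⟨xv, _, rfl⟩ := mem_image.1 (mem_coe.1 hφ)
    obtain ⟨xv', _, rfl⟩ := mem_image.1 (mem_coe.1 hφ')
    rw [freqVec_eq_iff hn]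
    have h1 : ∀ x, x ≠ α → cnt xv x = cnt xv' x := by
      intro x hx
      have := congrFun h x
      rwa [hκx, hκx, if_neg hx, if_neg hx] at this
    funext x
    by_cases hx : x = α
    · subst hx
      have h2 := (add_sum_erase univ (cnt xv) (mem_univ x)).trans (sum_cnt xv)
      have h3 := (add_sum_erase univ (cnt xv') (mem_univ x)).trans (sum_cnt xv')
      have h4 : ∑ y ∈ univ.erase x, cnt xv y = ∑ y ∈ univ.erase x, cnt xv' y :=
        sum_congr rfl fun y hy => h1 y (ne_of_mem_erase hy)
      omega
    · exact h1 x hx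
  have hFκ : ∀ φ ∈ univ.image (freqVec (a := a) (n := n)),
      ∏ x ∈ univ.erase α, g x (n * φ x) = F (κ φ) := by
    intro φ hφ
    obtain ⟨xv, _, rfl⟩ := mem_image.1 hφ
    simp only [hF]
    rw [← mul_prod_erase _ _ (mem_univ α), if_pos rfl, one_mul]
    refine prod_congr rfl fun x hx => ?_
    rw [if_neg (ne_of_mem_erase hx), hκx, if_neg (ne_of_mem_erase hx), hnf]
  rw [sum_congr rfl hFκ, ← sum_image (f := F) hinj]
  set t : Fin a → Finset ℕ := fun x => if x = α then {0} else range (n + 1) with ht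
  calc _ ≤ ∑ k ∈ Fintype.piFinset t, F k := by
        refine sum_le_sum_of_subset_of_nonneg ?_ fun k _ _ => prod_nonneg fun x _ => ?_
        · intro k hk
          obtain ⟨φ, hφ, rfl⟩ := mem_image.1 hk
          obtain ⟨xv, _, rfl⟩ := mem_image.1 hφ
          rw [Fintype.mem_piFinset]
          intro x
          rw [hκx]
          by_cases hx : x = α
          · simp [ht, hx]
          · simp [ht, hx, hle]
        · split_ifs
          · exact zero_le_one
          · exact hg _ _
    _ = ∏ x, ∑ k ∈ t x, if x = α then 1 else g x k := by
        rw [Finset.prod_univ_sum]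
    _ ≤ 1 := by
        refine prod_le_one (fun x _ => sum_nonneg fun k _ => ?_) fun x _ => ?_
        · split_ifs
          · exact zero_le_one
          · exact hg _ _
        · by_cases hx : x = α
          · simp [ht, hx]
          · simpa [ht, hx] using hg1 x

open Classical in
/-- Upper bound on the contribution of `y` to the conditional entropy, by Gibbs' inequality against
a product of discretised Gaussians of variance `s` centred at `n * e x`, `x ≠ α`. -/
lemma entropy_given_le (hμ : ∀ᵐ p ∂μ, p ∈ simplex a) (hQ : ∀ y x, 0 < Q y x) (hn : 0 < n)
    {s : ℝ} (hs : 0 < s) (α : Fin a) (e : Fin a → ℝ) (y : Fin n → Fin b) :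
    -(∑ φ ∈ univ.image (freqVec (a := a) (n := n)), Pphi Q μ φ y * Real.log (Pphi Q μ φ y /
        ∑ φ' ∈ univ.image (freqVec (a := a) (n := n)), Pphi Q μ φ' y)) ≤
      ∑ xv : Fin n → Fin a, wgt Q μ xv y *
        (n ^ 2 / (2 * s) * ∑ x ∈ univ.erase α, (freqVec xv x - e x) ^ 2 +
          ((a : ℝ) - 1) * (1 / (8 * s) + Real.log (2 * π * s) / 2)) := by
  have hπ := Real.pi_pos
  set Z : ℝ := Real.exp (1 / (8 * s)) * √(2 * π * s) with hZ
  have hZ0 : 0 < Z := by positivity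
  set g : Fin a → ℝ → ℝ := fun x t => Real.exp (-(t - n * e x) ^ 2 / (2 * s)) / Z with hg
  have hgpos : ∀ x t, 0 < g x t := fun x t => by positivity
  have h1 := entropy_gibbs (univ.image (freqVec (a := a) (n := n)))
    (fun φ => Pphi Q μ φ y) (fun φ => ∏ x ∈ univ.erase α, g x (n * φ x))
    (fun φ _ => Pphi_nonneg hμ hQ φ y) (fun φ _ => prod_pos fun x _ => hgpos _ _)
    (sum_image_freqVec_le hn α g (fun x t => (hgpos x t).le) fun x => by
      simp only [hg]
      rw [← sum_div, div_le_one hZ0]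
      exact gauss_sum hs _ _)
  refine h1.trans (le_of_eq ?_)
  rw [sum_Pphi_mul y (fun φ => Real.log (∏ x ∈ univ.erase α, g x (n * φ x))), ← sum_neg_distrib]
  refine sum_congr rfl fun xv _ => ?_
  rw [Real.log_prod (fun x _ => (hgpos _ _).ne'), ← mul_neg, ← sum_neg_distrib]
  congr 1
  have hlogZ : Real.log Z = 1 / (8 * s) + Real.log (2 * π * s) / 2 := by
    rw [hZ, Real.log_mul (by positivity) (by positivity), Real.log_exp,
      Real.log_sqrt (by positivity)]
  have hterm : ∀ x, -Real.log (g x (n * freqVec xv x)) =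
      n ^ 2 / (2 * s) * (freqVec xv x - e x) ^ 2 + (1 / (8 * s) + Real.log (2 * π * s) / 2) := by
    intro x
    simp only [hg]
    rw [Real.log_div (Real.exp_pos _).ne' hZ0.ne', Real.log_exp, hlogZ]
    field_simp
    ring
  simp_rw [hterm]
  rw [sum_add_distrib, ← mul_sum, sum_const, card_erase_of_mem (mem_univ α), card_univ,
    Fintype.card_fin, nsmul_eq_mul, Nat.cast_sub α.pos, Nat.cast_one]

/-- The average over the omitted coordinate `α` of `entropy_given_le`: each squared error
coordinate is omitted once out of `a` times, which gives the fraction `(a-1)/a` of the full error. -/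
lemma HFcond_le_aux [IsProbabilityMeasure μ] (hμ : ∀ᵐ p ∂μ, p ∈ simplex a)
    (hQ : ∀ y x, 0 < Q y x) (hQcol : ∀ x, ∑ y, Q y x = 1) (hn : 0 < n) {s : ℝ} (hs : 0 < s)
    (Est : (Fin n → Fin b) → Fin a → ℝ) (ha : 0 < a) :
    HFcond Q μ n ≤ ((a : ℝ) - 1) * (1 / (8 * s) + Real.log (2 * π * s) / 2 +
      n ^ 2 * MSEfreq Q μ Est / (2 * s * a)) := by
  classical
  obtain ⟨L, hL⟩ : ∃ L, L = 1 / (8 * s) + Real.log (2 * π * s) / 2 := ⟨_, rfl⟩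
  rw [← hL]
  have h1 : ∀ α : Fin a, HFcond Q μ n ≤ n ^ 2 / (2 * s) *
      (∑ y, ∑ xv : Fin n → Fin a, wgt Q μ xv y *
        ∑ x ∈ univ.erase α, (freqVec xv x - Est y x) ^ 2) + ((a : ℝ) - 1) * L := by
    intro α
    rw [HFcond_eq, ← sum_neg_distrib]
    refine (sum_le_sum fun y _ => entropy_given_le hμ hQ hn hs α (Est y) y).trans (le_of_eq ?_)
    rw [← hL]
    simp_rw [mul_add, sum_add_distrib, ← sum_mul]
    rw [sum_wgt hμ hQcol, one_mul, mul_sum]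
    congr 1
    refine sum_congr rfl fun y _ => ?_
    rw [mul_sum]
    exact sum_congr rfl fun xv _ => by ring
  have h2 := sum_le_sum fun α (_ : α ∈ (univ : Finset (Fin a))) => h1 α
  have h3 : ∑ α : Fin a, (∑ y, ∑ xv : Fin n → Fin a, wgt Q μ xv y *
        ∑ x ∈ univ.erase α, (freqVec xv x - Est y x) ^ 2) =
        ((a : ℝ) - 1) * MSEfreq Q μ Est := by
    unfold MSEfreq
    rw [sum_comm, sum_comm (s := (univ : Finset (Fin n → Fin a))), mul_sum]
    refine sum_congr rfl fun y _ => ?_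
    rw [sum_comm, mul_sum]
    refine sum_congr rfl fun xv _ => ?_
    rw [← mul_sum]
    have : ∀ α : Fin a, ∑ x ∈ univ.erase α, (freqVec xv x - Est y x) ^ 2 =
        ∑ x, (freqVec xv x - Est y x) ^ 2 - (freqVec xv α - Est y α) ^ 2 := fun α => by
      rw [← add_sum_erase _ _ (mem_univ α)]; ring
    simp_rw [this, sum_sub_distrib]
    simp
    ring
  rw [sum_add_distrib, ← mul_sum, h3] at h2
  simp only [sum_const, card_univ, Fintype.card_fin, nsmul_eq_mul] at h2
  have ha' : (0 : ℝ) < a := by exact_mod_cast ha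
  refine le_of_mul_le_mul_left (h2.trans (le_of_eq ?_)) ha'
  field_simp
  ring

/-- The choice `s = n² MSE / a + 1/4` in `HFcond_le_aux` absorbs the discretisation term `1/(8s)`
exactly. -/
lemma HFcond_upper [IsProbabilityMeasure μ] (hμ : ∀ᵐ p ∂μ, p ∈ simplex a)
    (hQ : ∀ y x, 0 < Q y x) (hQcol : ∀ x, ∑ y, Q y x = 1) (hn : 0 < n)
    (Est : (Fin n → Fin b) → Fin a → ℝ) (ha : 2 ≤ a) :
    Real.exp ((2 / ((a : ℝ) - 1)) * HFcond Q μ n) ≤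
      2 * π * Real.exp 1 * (n ^ 2 * MSEfreq Q μ Est / a + 1 / 4) := by
  have hπ := Real.pi_pos
  have ha' : (2 : ℝ) ≤ a := by exact_mod_cast ha
  have hM : 0 ≤ MSEfreq Q μ Est := sum_nonneg fun xv _ => sum_nonneg fun y _ =>
    mul_nonneg (wgt_nonneg hμ hQ xv y) (sum_nonneg fun x _ => sq_nonneg _)
  set s := n ^ 2 * MSEfreq Q μ Est / a + 1 / 4 with hs
  have hs0 : 0 < s := by positivity
  have h := HFcond_le_aux hμ hQ hQcol hn hs0 Est (by omega)
  have h2 : 1 / (8 * s) + Real.log (2 * π * s) / 2 + n ^ 2 * MSEfreq Q μ Est / (2 * s * a) =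
      (1 + Real.log (2 * π * s)) / 2 := by
    have : n ^ 2 * MSEfreq Q μ Est / (2 * s * a) = (s - 1 / 4) / (2 * s) := by
      rw [hs]; field_simp; ring
    rw [this]; field_simp; ring
  rw [h2] at h
  have h3 : (2 / ((a : ℝ) - 1)) * HFcond Q μ n ≤ 1 + Real.log (2 * π * s) := by
    have hm : 0 < (a : ℝ) - 1 := by linarith
    rw [div_mul_eq_mul_div, div_le_iff₀ hm]
    linarith
  refine (Real.exp_le_exp.2 h3).trans (le_of_eq ?_)
  rw [Real.exp_add, Real.exp_log (by positivity)]
  ring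

/-! ### The optimal error is of order at most one over n -/

/-- The posterior mean minimises the mean squared error. -/
lemma MSEfreq_PhiOpt_le (hμ : ∀ᵐ p ∂μ, p ∈ simplex a)
    (hQ : ∀ y x, 0 < Q y x) (Est : (Fin n → Fin b) → Fin a → ℝ) :
    MSEfreq (n := n) Q μ (PhiOpt Q μ) ≤ MSEfreq Q μ Est := by
  have hform : ∀ E : (Fin n → Fin b) → Fin a → ℝ, MSEfreq Q μ E =
      ∑ y, ∑ α, ∑ xv : Fin n → Fin a, wgt Q μ xv y * (freqVec xv α - E y α) ^ 2 := by
    intro E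
    unfold MSEfreq
    rw [sum_comm]
    refine sum_congr rfl fun y _ => ?_
    rw [sum_comm]
    exact sum_congr rfl fun xv _ => mul_sum _ _ _
  rw [hform, hform]
  refine sum_le_sum fun y _ => sum_le_sum fun α _ => ?_
  have hw : ∀ xv, 0 ≤ wgt Q μ xv y := fun xv => wgt_nonneg hμ hQ xv y
  set W := ∑ xv : Fin n → Fin a, wgt Q μ xv y with hW
  have hW0 : 0 ≤ W := sum_nonneg fun xv _ => hw xv
  have hexp : ∀ e : ℝ, ∑ xv : Fin n → Fin a, wgt Q μ xv y * (freqVec xv α - e) ^ 2 =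
      ∑ xv : Fin n → Fin a, wgt Q μ xv y * freqVec xv α ^ 2 -
        2 * e * (∑ xv : Fin n → Fin a, wgt Q μ xv y * freqVec xv α) + W * e ^ 2 := by
    intro e
    rw [hW, mul_sum, sum_mul, ← sum_sub_distrib, ← sum_add_distrib]
    exact sum_congr rfl fun xv _ => by ring
  rcases hW0.eq_or_lt with h0 | h0
  · have : ∀ xv, wgt Q μ xv y = 0 := fun xv =>
      (sum_eq_zero_iff_of_nonneg (fun xv _ => hw xv)).1 (hW.symm.trans h0.symm) xv (mem_univ _)
    simp [this]
  · rw [hexp, hexp]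
    have hopt : PhiOpt Q μ y α * W = ∑ xv : Fin n → Fin a, wgt Q μ xv y * freqVec xv α := by
      unfold PhiOpt
      rw [← hW, div_mul_cancel₀ _ h0.ne']
    rw [← hopt]
    nlinarith [mul_nonneg h0.le (sq_nonneg (Est y α - PhiOpt Q μ y α))]

lemma exists_left_inverse (hrank : Q.rank = a) : ∃ A : Matrix (Fin a) (Fin b) ℝ, A * Q = 1 := by
  have hker : Q.mulVecLin.ker = ⊥ := by
    have h := LinearMap.finrank_range_add_finrank_ker Q.mulVecLin
    rw [Matrix.rank] at hrank
    rw [hrank, Module.finrank_fin_fun] at h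
    exact Submodule.finrank_eq_zero.1 (by omega)
  obtain ⟨g, hg⟩ := LinearMap.exists_leftInverse_of_injective _ hker
  refine ⟨LinearMap.toMatrix' g, ?_⟩
  have : LinearMap.toMatrix' (g ∘ₗ Q.mulVecLin) = 1 := by rw [hg, LinearMap.toMatrix'_id]
  rwa [LinearMap.toMatrix'_comp, ← Matrix.toLin'_apply', LinearMap.toMatrix'_toLin'] at this

/-- The optimal estimator is compared with the unbiased estimator `α ↦ (1/n) ∑ i, A α (y i)` for a
left inverse `A` of `Q`, whose error is an average of `n` independent centred variables. -/
lemma exists_MSEfreq_le [IsProbabilityMeasure μ] (hμ : ∀ᵐ p ∂μ, p ∈ simplex a)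
    (hQ : ∀ y x, 0 < Q y x) (hQcol : ∀ x, ∑ y, Q y x = 1) (hrank : Q.rank = a) :
    ∃ C : ℝ, 0 ≤ C ∧ ∀ n : ℕ, 0 < n → MSEfreq (n := n) Q μ (PhiOpt Q μ) ≤ C / n := by
  obtain ⟨A, hA⟩ := exists_left_inverse hrank
  refine ⟨∑ α, ∑ y, (1 + |A α y|) ^ 2, by positivity, fun n hn => ?_⟩
  have hn' : (0 : ℝ) < n := by exact_mod_cast hn
  refine (MSEfreq_PhiOpt_le hμ hQ (fun y α => (∑ i, A α (y i)) / n)).trans ?_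
  have key : ∀ (xv : Fin n → Fin a) (α : Fin a),
      ∑ y : Fin n → Fin b, (∏ i, Q (y i) (xv i)) *
        (freqVec xv α - (∑ i, A α (y i)) / n) ^ 2 ≤ (∑ y, (1 + |A α y|) ^ 2) / n := by
    intro xv α
    set v : Fin n → Fin b → ℝ := fun i y => (if xv i = α then 1 else 0) - A α y with hv
    have hmean : ∀ i, ∑ y, Q y (xv i) * v i y = 0 := by
      intro i
      have h1 := congrFun (congrFun hA α) (xv i)
      rw [Matrix.mul_apply, Matrix.one_apply] at h1
      simp only [hv, mul_sub, sum_sub_distrib, ← sum_mul, hQcol, one_mul]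
      rw [sum_congr rfl fun y _ => mul_comm (Q y (xv i)) (A α y), h1]
      simp [eq_comm]
    have h2 := (pi_second_moment n (fun i y => Q y (xv i)) v (fun i => hQcol _) hmean).2.2
    have h3 : ∀ y : Fin n → Fin b, freqVec xv α - (∑ i, A α (y i)) / n =
        (∑ i, v i (y i)) / n := by
      intro y
      simp only [hv, sum_sub_distrib, freqVec_apply, cnt, sum_boole]
      ring
    simp_rw [h3, div_pow, mul_div_assoc']
    rw [← sum_div, h2, div_le_div_iff₀ (by positivity) hn']
    have h4 : ∑ i, ∑ y, Q y (xv i) * v i y ^ 2 ≤ n * ∑ y, (1 + |A α y|) ^ 2 := by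
      calc _ ≤ ∑ _i : Fin n, ∑ y, (1 + |A α y|) ^ 2 := by
            refine sum_le_sum fun i _ => sum_le_sum fun y _ => ?_
            have hQ1 : Q y (xv i) ≤ 1 := by
              rw [← hQcol (xv i)]
              exact single_le_sum (f := fun y => Q y (xv i)) (fun y _ => (hQ _ _).le) (mem_univ y)
            have hv1 : v i y ^ 2 ≤ (1 + |A α y|) ^ 2 := by
              rw [← sq_abs (v i y)]
              refine pow_le_pow_left₀ (abs_nonneg _) ((abs_sub _ _).trans ?_) 2
              gcongr
              split_ifs <;> simp
            exact (mul_le_of_le_one_left (sq_nonneg _) hQ1).trans hv1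
        _ = _ := by simp
    nlinarith
  calc MSEfreq Q μ (fun y α => (∑ i, A α (y i)) / n) =
      ∑ xv : Fin n → Fin a, (∫ p, ∏ i, p (xv i) ∂μ) * ∑ α, ∑ y : Fin n → Fin b,
        (∏ i, Q (y i) (xv i)) * (freqVec xv α - (∑ i, A α (y i)) / n) ^ 2 := by
        unfold MSEfreq
        refine sum_congr rfl fun xv _ => ?_
        rw [sum_comm, mul_sum]
        refine sum_congr rfl fun y _ => ?_
        rw [wgt_eq, ← mul_sum]
        ring
    _ ≤ ∑ xv : Fin n → Fin a, (∫ p, ∏ i, p (xv i) ∂μ) *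
        ∑ α : Fin a, (∑ y : Fin b, (1 + |A α y|) ^ 2) / (n : ℝ) := by
        refine sum_le_sum fun xv _ => mul_le_mul_of_nonneg_left
          (sum_le_sum fun α _ => key xv α) (integral_prod_nonneg hμ xv)
    _ = _ := by rw [← sum_mul, sum_integral_prod hμ, one_mul, sum_div]

end

/-! ### Conclusion -/

/-- The entropy power `e^{2H/m}` grows at least linearly in `n`. -/
lemma exists_exp_HFcond_ge {m b : ℕ} (hm : 0 < m) (hb : 0 < b) {Q : Matrix (Fin b) (Fin (m + 1)) ℝ}
    (hQ : ∀ y x, 0 < Q y x) (hQcol : ∀ x, ∑ y, Q y x = 1)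
    {μ : Measure (Fin (m + 1) → ℝ)} [IsProbabilityMeasure μ]
    {f : (Fin m → ℝ) → ℝ} (hf : IsContDensity (a := m + 1) μ f) :
    ∃ c : ℝ, 0 < c ∧ ∀ n : ℕ, 0 < n → c * n ≤ Real.exp ((2 / (m : ℝ)) * HFcond Q μ n) := by
  have : Nonempty (Fin b) := ⟨⟨0, hb⟩⟩
  obtain ⟨⟨y₀, x₀⟩, hmin⟩ := Finite.exists_min fun z : Fin b × Fin (m + 1) => Q z.1 z.2
  set δ := Q y₀ x₀ with hδ
  have hδ0 : 0 < δ := hQ _ _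
  obtain ⟨M, hM, hMb⟩ := integral_spread_measure_le hf
  set κ : ℝ := δ ^ 2 / ((m + 1 : ℕ) : ℝ) with hκ
  have hκ0 : 0 < κ := by positivity
  have hK := Kc_pos
  have hm' : (0 : ℝ) < m := by exact_mod_cast hm
  refine ⟨M ^ (-(2 / (m : ℝ))) * κ / (2 * Kc) ^ 2, by positivity, fun n hn => ?_⟩
  have hn' : (0 : ℝ) < n := by exact_mod_cast hn
  set r := 2 * Kc / √(n * κ) with hr
  have hr0 : 0 < r := by positivity
  have h := HFcond_lower (ae_mem_simplex hf) hQ hQcol hn hδ0 (fun y x => hmin (y, x))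
    (B := M * r ^ m) (by positivity) (hMb _ (by positivity))
  have hrsq : r ^ 2 = (2 * Kc) ^ 2 / (n * κ) := by
    rw [hr, div_pow, Real.sq_sqrt (by positivity)]
  calc M ^ (-(2 / (m : ℝ))) * κ / (2 * Kc) ^ 2 * n
      = M ^ (-(2 / (m : ℝ))) * (r ^ 2)⁻¹ := by rw [hrsq]; field_simp
    _ = Real.exp ((2 / (m : ℝ)) * (-Real.log (M * r ^ m))) := by
        rw [Real.rpow_def_of_pos hM, ← Real.exp_log (show 0 < (r ^ 2)⁻¹ by positivity),
          ← Real.exp_add, Real.log_mul hM.ne' (by positivity), Real.log_inv, Real.log_pow,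
          Real.log_pow]
        congr 1
        field_simp
        push_cast
        ring
    _ ≤ _ := Real.exp_le_exp.2 (mul_le_mul_of_nonneg_left h (by positivity))

/-- asymptotic entropy lower bound on the optimal MSE for
frequency estimation. -/
theorem MSEfreq_liminf_entropy_bound {a b : ℕ} (ha : 2 ≤ a) (hb : 2 ≤ b)
    (Q : Matrix (Fin b) (Fin a) ℝ)
    (hQpos : ∀ y x, 0 < Q y x) (hQcol : ∀ x, ∑ y, Q y x = 1)
    (μ : Measure (Fin a → ℝ)) [IsProbabilityMeasure μ]
    (hrank : Q.rank = a)
    (f : (Fin (a - 1) → ℝ) → ℝ) (hf : IsContDensity μ f) :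
    1 ≤ Filter.liminf (fun n : ℕ =>
      MSEfreq (n := n) Q μ (PhiOpt Q μ) /
        ((a : ℝ) / (2 * π * Real.exp 1 * (n : ℝ) ^ 2) *
          Real.exp ((2 / ((a : ℝ) - 1)) * HFcond Q μ n))) Filter.atTop := by
  obtain ⟨m, rfl⟩ : ∃ m, a = m + 1 := ⟨a - 1, by omega⟩
  have hμ : ∀ᵐ p ∂μ, p ∈ simplex (m + 1) := ae_mem_simplex (f := f) hf
  obtain ⟨c, hc, hlow⟩ := exists_exp_HFcond_ge (f := f) (by omega) (by omega) hQpos hQcol hf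
  obtain ⟨C, hC, hup⟩ := exists_MSEfreq_le hμ hQpos hQcol hrank
  have hcast : ((m + 1 : ℕ) : ℝ) - 1 = m := by push_cast; ring
  have hπ := Real.pi_pos
  have he := Real.exp_pos 1
  set K := 2 * π * Real.exp 1 with hK
  have hK0 : 0 < K := by positivity
  set A : ℝ := ((m + 1 : ℕ) : ℝ) with hA
  have hA0 : 0 < A := by positivity
  set u : ℕ → ℝ := fun n => MSEfreq (n := n) Q μ (PhiOpt Q μ) /
        (A / (K * (n : ℝ) ^ 2) * Real.exp ((2 / (A - 1)) * HFcond Q μ n)) with hu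
  -- `K * (n² MSE / a + 1/4) ≥ e^{2H/m}` divided by `e^{2H/m} ≥ c n`.
  have hlower : ∀ n : ℕ, 0 < n → 1 - K / (4 * c) / n ≤ u n := by
    intro n hn
    have hn' : (0 : ℝ) < n := by exact_mod_cast hn
    have h1 := HFcond_upper hμ hQpos hQcol hn (PhiOpt Q μ) ha
    have h2 := hlow n hn
    rw [← hcast] at h2
    simp only [hu]
    set E := Real.exp ((2 / (A - 1)) * HFcond Q μ n)
    set N := MSEfreq (n := n) Q μ (PhiOpt Q μ)
    have hE : 0 < E := Real.exp_pos _
    have h3 : K / (4 * E) ≤ K / (4 * c) / n := by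
      rw [div_div, mul_assoc]; gcongr
    refine (sub_le_sub_left h3 1).trans ?_
    rw [le_div_iff₀ (by positivity)]
    have h4 : (1 - K / (4 * E)) * (A / (K * n ^ 2) * E) = A / (K * n ^ 2) * (E - K / 4) := by
      field_simp
    rw [h4, div_mul_eq_mul_div, div_le_iff₀ (by positivity)]
    have h5 : A * E ≤ A * (K * (n ^ 2 * N / A + 1 / 4)) := mul_le_mul_of_nonneg_left h1 hA0.le
    have h6 : A * (K * (n ^ 2 * N / A + 1 / 4)) = K * n ^ 2 * N + A * K / 4 := by
      field_simp
    linarith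
  have hupper : ∀ n : ℕ, 0 < n → u n ≤ C * K / (A * c) := by
    intro n hn
    have hn' : (0 : ℝ) < n := by exact_mod_cast hn
    have h2 := hlow n hn
    rw [← hcast] at h2
    simp only [hu]
    calc _ ≤ (C / n) / (A / (K * (n : ℝ) ^ 2) * (c * n)) := by
          gcongr
          exact hup n hn
      _ = _ := by field_simp
  have hlim : Tendsto (fun n : ℕ => 1 - K / (4 * c) / (n : ℝ)) atTop (nhds 1) := by
    simpa using (tendsto_const_div_atTop_nhds_zero_nat (K / (4 * c))).const_sub 1
  rw [← hlim.liminf_eq]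
  -- Monotonicity of a real-valued `liminf` needs the larger function to be frequently bounded
  -- above, which `hupper` provides.
  refine liminf_le_liminf ?_ hlim.isBoundedUnder_ge ?_
  · filter_upwards [eventually_gt_atTop 0] with n hn using hlower n hn
  · refine IsBoundedUnder.isCoboundedUnder_ge ⟨C * K / (A * c), ?_⟩
    rw [eventually_map]
    filter_upwards [eventually_gt_atTop 0] with n hn using hupper n hn


end
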